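/- arXiv:1202.0657 — 3 statements merged into one kernel-verified Lean document; each statement's English description precedes it below -/
import Mathlib

section
/- There exists a constant C > 0 such that for every continuously differentiable compactly supported vector field w : ℝ³ → ℝ³ one has ∫_{{x ∈ ℝ³ : x₃ < 0}} |∇w|² dx ≤ C ∫_{{x ∈ ℝ³ : x₃ < 0}} |Sw|² dx, where ∇w is the Jacobian matrix (∂_j w_i)_{ij}, Sw = ½(∇w + (∇w)ᵀ), and |·| is the Frobenius norm. -/
open MeasureTheory

/-- The `j`-th partial derivative of a function on `ℝ³` (the coordinate of index `2` is `z`). -/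
noncomputable def pd (j : Fin 3) (f : (Fin 3 → ℝ) → ℝ) (x : Fin 3 → ℝ) : ℝ :=
  fderiv ℝ f x (Pi.single j 1)

/-- The lower half-space `{x ∈ ℝ³ : x₃ < 0}`. -/
def lowerHalf : Set (Fin 3 → ℝ) := {x | x 2 < 0}

/-!
On the whole space, Korn's inequality with constant `2` follows from `2|Sw|² = |∇w|² + tr((∇w)²)`
and `∫ tr((∇w)²) = ∫ (div w)² ≥ 0`; the latter is an integration by parts, which is available for
Lipschitz fields thanks to Rademacher's theorem.

The half-space is reduced to this by reflection. Pulling `w` back as a `1`-form, `w ↦ Aᵀ w(A ·)`,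
conjugates the symmetric gradient, `S(Aᵀ w(A ·)) = Aᵀ (Sw)(A ·) A`, so it controls the symmetric
gradient by that of `w` alone. With `A` the maps `(y, z) ↦ (y, -z)` and `(y, z) ↦ (y, -3z)` and the
weights `2` and `-1`, the tangential components match on the plane `z = 0` because `2 - 1 = 1`, and
the normal one because `2 · (-1) - (-3) = 1`. The extended field is then Lipschitz, and summing up
the squares gives the constant `2 · (1 + 8 + 162 / 3) = 126`.
-/

open Filter Matrix Set Topology
open scoped NNReal

section Gluing

theorem exists_mem_frontier_of_isPreconnected {X : Type*} [TopologicalSpace X] {s t : Set X}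
    (ht : IsPreconnected t) {x y : X} (hx : x ∈ t ∩ s) (hy : y ∈ t \ s) :
    ∃ z ∈ t, z ∈ frontier s := by
  by_contra! hfr
  have ht_cover : t ⊆ interior s ∪ interior sᶜ := by
    rw [← compl_frontier_eq_union_interior]
    exact hfr
  have hxs : x ∈ interior s :=
    (ht_cover hx.1).resolve_right fun h => interior_subset h hx.2
  have hys : y ∈ interior sᶜ :=
    (ht_cover hy.1).resolve_left fun h => hy.2 (interior_subset h)
  obtain ⟨z, -, hz, hz'⟩ := ht _ _ isOpen_interior isOpen_interior ht_cover
    ⟨x, hx.1, hxs⟩ ⟨y, hy.1, hys⟩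
  exact interior_subset hz' (interior_subset hz)

variable {E F : Type*} [SeminormedAddCommGroup E] [NormedSpace ℝ E] [PseudoMetricSpace F]

theorem lipschitzWith_piecewise {f g : E → F} {K : ℝ≥0} {s : Set E} [∀ x, Decidable (x ∈ s)]
    (hf : LipschitzWith K f) (hg : LipschitzWith K g) (hfg : EqOn f g (frontier s)) :
    LipschitzWith K (s.piecewise f g) := by
  have crossing {x y : E} (hx : x ∈ s) (hy : y ∉ s) : dist (f x) (g y) ≤ K * dist x y := by
    obtain ⟨z, hz, hzs⟩ := exists_mem_frontier_of_isPreconnected (convex_segment x y).isPreconnected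
      ⟨left_mem_segment ℝ x y, hx⟩ ⟨right_mem_segment ℝ x y, hy⟩
    calc dist (f x) (g y)
        ≤ dist (f x) (f z) + dist (g z) (g y) := hfg hzs ▸ dist_triangle _ _ _
      _ ≤ K * dist x z + K * dist z y := add_le_add (hf.dist_le_mul x z) (hg.dist_le_mul z y)
      _ = K * dist x y := by rw [← mul_add, dist_add_dist_of_mem_segment hz]
  refine LipschitzWith.of_dist_le_mul fun x y => ?_
  by_cases hx : x ∈ s <;> by_cases hy : y ∈ s
  · simpa only [piecewise_eq_of_mem s f g, hx, hy] using hf.dist_le_mul x y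
  · simpa only [piecewise_eq_of_mem s f g hx, piecewise_eq_of_notMem s f g hy] using crossing hx hy
  · simpa only [piecewise_eq_of_notMem s f g hx, piecewise_eq_of_mem s f g hy, dist_comm]
      using crossing hy hx
  · simpa only [piecewise_eq_of_notMem s f g hx, piecewise_eq_of_notMem s f g hy]
      using hg.dist_le_mul x y

end Gluing

section LineDeriv

variable {E : Type*} [NormedAddCommGroup E] [NormedSpace ℝ E] {f g : E → ℝ} {C D : ℝ≥0}

theorem support_lineDeriv_subset (f : E → ℝ) (v : E) :
    Function.support (fun x => lineDeriv ℝ f x v) ⊆ tsupport f := by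
  intro x hx
  contrapose! hx
  rw [Function.notMem_support, (notMem_tsupport_iff_eventuallyEq.mp hx).lineDeriv_eq]
  simp [lineDeriv]

theorem lineDeriv_comp_add_right (f : E → ℝ) (a x v : E) :
    lineDeriv ℝ (fun y => f (y + a)) x v = lineDeriv ℝ f (x + a) v := by
  simp only [lineDeriv, add_right_comm x _ a]

variable [MeasurableSpace E] [BorelSpace E] {μ : Measure E}

theorem integrable_lineDeriv_mul (hf : LipschitzWith C f) (hg : Integrable g μ) (v : E) :
    Integrable (fun x => lineDeriv ℝ f x v * g x) μ :=
  hg.smul_of_top_right (hf.memLp_lineDeriv v)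

theorem integrable_lineDeriv [IsLocallyFiniteMeasure μ] (hf : LipschitzWith C f)
    (h'f : HasCompactSupport f) (v : E) : Integrable (fun x => lineDeriv ℝ f x v) μ :=
  (integrableOn_iff_integrable_of_support_subset (support_lineDeriv_subset f v)).mp
    (((hf.memLp_lineDeriv v).locallyIntegrable le_top).integrableOn_isCompact h'f)

variable [FiniteDimensional ℝ E] [μ.IsAddHaarMeasure]

theorem integral_lineDeriv_mul_comp_add_right (hf : LipschitzWith C f) (hg : LipschitzWith D g)
    (h'g : HasCompactSupport g) (v a : E) :
    ∫ x, lineDeriv ℝ f x v * g (x + a) ∂μ = ∫ x, lineDeriv ℝ g x (-v) * f (x + -a) ∂μ := by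
  have hga : LipschitzWith D fun x => g (x + a) := by
    simpa only [mul_one, Function.comp_def] using hg.comp (isometry_add_right a).lipschitz
  rw [hf.integral_lineDeriv_mul_eq hga (h'g.comp_homeomorph (Homeomorph.addRight a)),
    ← integral_add_right_eq_self _ (-a)]
  simp only [lineDeriv_comp_add_right, neg_add_cancel_right]

theorem integral_lineDeriv_mul_sub (hf : LipschitzWith C f)
    (h'f : HasCompactSupport f) (hg : LipschitzWith D g) (h'g : HasCompactSupport g) (v a : E) :
    ∫ x, (g (x + a) - g x) * lineDeriv ℝ f x v ∂μ =
      ∫ x, (f (x + -a) - f x) * lineDeriv ℝ g x (-v) ∂μ := by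
  have integrable_translate {h : E → ℝ} {K : ℝ≥0} (hh : LipschitzWith K h)
      (h'h : HasCompactSupport h) (b : E) : Integrable (fun x => h (x + b)) μ :=
    (hh.continuous.integrable_of_hasCompactSupport h'h).comp_add_right b
  have parts_a := integral_lineDeriv_mul_comp_add_right (μ := μ) hf hg h'g v a
  have parts_zero := hf.integral_lineDeriv_mul_eq (μ := μ) hg h'g v
  simp_rw [mul_comm (_ - _), mul_sub]
  rw [integral_sub, integral_sub, parts_a, parts_zero]
  · exact integrable_lineDeriv_mul hg (integrable_translate hf h'f (-a)) (-v)
  · exact integrable_lineDeriv_mul hg (hf.continuous.integrable_of_hasCompactSupport h'f) (-v)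
  · exact integrable_lineDeriv_mul hf (integrable_translate hg h'g a) v
  · exact integrable_lineDeriv_mul hf (hg.continuous.integrable_of_hasCompactSupport h'g) v

theorem integral_lineDeriv_mul_lineDeriv_comm (hf : LipschitzWith C f)
    (h'f : HasCompactSupport f) (hg : LipschitzWith D g) (h'g : HasCompactSupport g) (v w : E) :
    ∫ x, lineDeriv ℝ f x v * lineDeriv ℝ g x w ∂μ =
      ∫ x, lineDeriv ℝ f x w * lineDeriv ℝ g x v ∂μ := by
  have limit_g := hg.integral_inv_smul_sub_mul_tendsto_integral_lineDeriv_mul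
    (integrable_lineDeriv (μ := μ) hf h'f v) w
  have limit_f := hf.integral_inv_smul_sub_mul_tendsto_integral_lineDeriv_mul
    (integrable_lineDeriv (μ := μ) hg h'g (-v)) (-w)
  have quotients_eq (t : ℝ) : ∫ x, (t⁻¹ • (g (x + t • w) - g x)) * lineDeriv ℝ f x v ∂μ =
      ∫ x, (t⁻¹ • (f (x + t • -w) - f x)) * lineDeriv ℝ g x (-v) ∂μ := by
    simp only [smul_eq_mul, mul_assoc, integral_const_mul, smul_neg,
      integral_lineDeriv_mul_sub hf h'f hg h'g]
  simp only [quotients_eq] at limit_g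
  simpa only [lineDeriv_neg, neg_mul_neg, mul_comm (lineDeriv ℝ g _ w)]
    using tendsto_nhds_unique limit_g limit_f

end LineDeriv

section Components

variable {X ι : Type*} {f : X → ι → ℝ}

theorem lipschitzWith_apply [PseudoEMetricSpace X] [Fintype ι] {K : ℝ≥0} (hf : LipschitzWith K f)
    (i : ι) : LipschitzWith K fun x => f x i := by
  simpa only [one_mul, Function.comp_def] using (LipschitzWith.eval i).comp hf

theorem hasCompactSupport_apply [TopologicalSpace X] (hf : HasCompactSupport f) (i : ι) :
    HasCompactSupport fun x => f x i :=
  hf.comp_left (g := fun v : ι → ℝ => v i) rfl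

end Components

section Matrix

variable {ι : Type*}

/-- The symmetric part `½(A + Aᵀ)`; applied to `jacobian w x` it gives `Sw(x)`. -/
noncomputable def symPart (A : Matrix ι ι ℝ) : Matrix ι ι ℝ := (2⁻¹ : ℝ) • (A + Aᵀ)

theorem symPart_apply (A : Matrix ι ι ℝ) (i j : ι) : symPart A i j = (A i j + A j i) / 2 :=
  inv_mul_eq_div 2 _

theorem symPart_sub (A B : Matrix ι ι ℝ) : symPart (A - B) = symPart A - symPart B := by
  rw [symPart, symPart, symPart, transpose_sub, ← smul_sub, sub_add_sub_comm]

theorem symPart_smul (c : ℝ) (A : Matrix ι ι ℝ) : symPart (c • A) = c • symPart A := by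
  rw [symPart, symPart, transpose_smul, ← smul_add, smul_comm]

variable [Fintype ι]

/-- The squared Frobenius norm `|A|²` of a real matrix. -/
def frobSq (A : Matrix ι ι ℝ) : ℝ := ∑ i, ∑ j, A i j ^ 2

theorem symPart_diagonal_mul_mul_diagonal [DecidableEq ι] (d : ι → ℝ) (A : Matrix ι ι ℝ) :
    symPart (diagonal d * A * diagonal d) = diagonal d * symPart A * diagonal d := by
  simp only [symPart, transpose_mul, diagonal_transpose, Matrix.mul_smul, Matrix.smul_mul,
    Matrix.mul_add, Matrix.add_mul, Matrix.mul_assoc]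

theorem frobSq_nonneg (A : Matrix ι ι ℝ) : 0 ≤ frobSq A :=
  Finset.sum_nonneg fun _ _ => Finset.sum_nonneg fun _ _ => sq_nonneg _

theorem frobSq_smul (c : ℝ) (A : Matrix ι ι ℝ) : frobSq (c • A) = c ^ 2 * frobSq A := by
  simp only [frobSq, Matrix.smul_apply, smul_eq_mul, mul_pow, Finset.mul_sum]

theorem frobSq_sub_le (A B : Matrix ι ι ℝ) : frobSq (A - B) ≤ 2 * (frobSq A + frobSq B) := by
  simp only [frobSq, ← Finset.sum_add_distrib, Finset.mul_sum]
  gcongr with i _ j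
  rw [Matrix.sub_apply]
  linarith [sq_nonneg (A i j + B i j)]

theorem frobSq_diagonal_mul_mul_diagonal_le [DecidableEq ι] {d : ι → ℝ} {l : ℝ}
    (hd : ∀ i, |d i| ≤ l) (A : Matrix ι ι ℝ) :
    frobSq (diagonal d * A * diagonal d) ≤ l ^ 4 * frobSq A := by
  have sq_le (i : ι) : d i ^ 2 ≤ l ^ 2 := sq_le_sq' (abs_le.mp (hd i)).1 (abs_le.mp (hd i)).2
  simp only [frobSq, mul_diagonal, diagonal_mul, Finset.mul_sum]
  gcongr with i _ j
  calc (d i * A i j * d j) ^ 2 = d i ^ 2 * d j ^ 2 * A i j ^ 2 := by ring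
    _ ≤ l ^ 2 * l ^ 2 * A i j ^ 2 := by gcongr ?_ * ?_ * _ <;> exact sq_le _
    _ = l ^ 4 * A i j ^ 2 := by ring

theorem two_mul_frobSq_symPart (A : Matrix ι ι ℝ) :
    2 * frobSq (symPart A) = frobSq A + trace (A * A) := by
  have frobSq_transpose : ∑ i, ∑ j, A j i ^ 2 = frobSq A := Finset.sum_comm
  have entry (i j : ι) : 2 * symPart A i j ^ 2 =
      2⁻¹ * A i j ^ 2 + 2⁻¹ * A j i ^ 2 + A i j * A j i := by
    rw [symPart_apply]
    ring
  calc 2 * frobSq (symPart A)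
      = 2⁻¹ * frobSq A + 2⁻¹ * (∑ i, ∑ j, A j i ^ 2) + ∑ i, ∑ j, A i j * A j i := by
        simp only [frobSq, Finset.mul_sum, entry, Finset.sum_add_distrib]
    _ = frobSq A + trace (A * A) := by
        rw [frobSq_transpose]
        simp only [trace, diag_apply, Matrix.mul_apply]
        ring

end Matrix

section Jacobian

variable {ι : Type*} [DecidableEq ι]

/-- The Jacobian matrix `∇w = (∂ⱼwᵢ)ᵢⱼ`. Line derivatives of the components are used, so that an
entry only depends on the behaviour of `wᵢ` along the `j`-th coordinate direction. -/
noncomputable def jacobian (w : (ι → ℝ) → ι → ℝ) (x : ι → ℝ) : Matrix ι ι ℝ :=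
  Matrix.of fun i j => lineDeriv ℝ (fun y => w y i) x (Pi.single j 1)

theorem jacobian_congr_of_eventuallyEq [Finite ι]
    {u v : (ι → ℝ) → ι → ℝ} {x : ι → ℝ} (h : u =ᶠ[𝓝 x] v) :
    jacobian u x = jacobian v x := by
  ext i j
  cases nonempty_fintype ι
  have hi : (fun y => u y i) =ᶠ[𝓝 x] fun y => v y i := h.fun_comp (· i)
  exact hi.lineDeriv_eq

theorem jacobian_const_smul (c : ℝ) (w : (ι → ℝ) → ι → ℝ) (x : ι → ℝ) :
    jacobian (c • w) x = c • jacobian w x := by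
  ext i j
  exact deriv_const_mul_field c

theorem jacobian_sub [Finite ι] {u v : (ι → ℝ) → ι → ℝ} {x : ι → ℝ}
    (hu : DifferentiableAt ℝ u x) (hv : DifferentiableAt ℝ v x) :
    jacobian (u - v) x = jacobian u x - jacobian v x := by
  ext i j
  cases nonempty_fintype ι
  have hui := (differentiableAt_pi.mp hu i).hasFDerivAt
  have hvi := (differentiableAt_pi.mp hv i).hasFDerivAt
  rw [Matrix.sub_apply]
  simp only [jacobian, of_apply]
  rw [(hui.hasLineDerivAt _).lineDeriv, (hvi.hasLineDerivAt _).lineDeriv]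
  exact ((hui.sub hvi).hasLineDerivAt _).lineDeriv

/-- The pullback `Aᵀ w(Ax)` of the field `w` (seen as a `1`-form) by the matrix `A = diagonal d`. -/
def diagPullback (d : ι → ℝ) (w : (ι → ℝ) → ι → ℝ) : (ι → ℝ) → ι → ℝ := fun x => d * w (d * x)

theorem jacobian_diagPullback [Fintype ι] (d : ι → ℝ) (w : (ι → ℝ) → ι → ℝ) (x : ι → ℝ) :
    jacobian (diagPullback d w) x = diagonal d * jacobian w (d * x) * diagonal d := by
  ext i j
  have mul_line (t : ℝ) : d * (x + t • Pi.single j 1) = d * x + t • d j • Pi.single j 1 := by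
    ext k
    rcases eq_or_ne k j with rfl | hk
    · simp; ring
    · simp [hk]
  calc jacobian (diagPullback d w) x i j
      = d i * lineDeriv ℝ (fun y => w y i) (d * x) (d j • Pi.single j 1) := by
        simp only [jacobian, diagPullback, of_apply, lineDeriv, Pi.mul_apply, mul_line,
          deriv_const_mul_field]
    _ = (diagonal d * jacobian w (d * x) * diagonal d) i j := by
        rw [lineDeriv_smul, mul_diagonal, diagonal_mul, smul_eq_mul, jacobian, of_apply]
        ring

end Jacobian

section WholeSpace

variable {ι : Type*} [Fintype ι] [DecidableEq ι] {w : (ι → ℝ) → ι → ℝ} {K : ℝ≥0}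

theorem integrable_jacobian_mul_jacobian (hw : LipschitzWith K w) (h'w : HasCompactSupport w)
    (i j k l : ι) : Integrable fun x => jacobian w x i j * jacobian w x k l :=
  integrable_lineDeriv_mul (lipschitzWith_apply hw i)
    (integrable_lineDeriv (lipschitzWith_apply hw k) (hasCompactSupport_apply h'w k) _) _

theorem integrable_frobSq_jacobian (hw : LipschitzWith K w) (h'w : HasCompactSupport w) :
    Integrable fun x => frobSq (jacobian w x) :=
  integrable_finsetSum _ fun i _ => integrable_finsetSum _ fun j _ => by
    simpa only [sq] using integrable_jacobian_mul_jacobian hw h'w i j i j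

theorem integrable_trace_jacobian_mul_self (hw : LipschitzWith K w) (h'w : HasCompactSupport w) :
    Integrable fun x => trace (jacobian w x * jacobian w x) :=
  integrable_finsetSum _ fun i _ => integrable_finsetSum _ fun j _ =>
    integrable_jacobian_mul_jacobian hw h'w i j j i

theorem integrable_frobSq_symPart_jacobian (hw : LipschitzWith K w) (h'w : HasCompactSupport w) :
    Integrable fun x => frobSq (symPart (jacobian w x)) := by
  have key := (integrable_frobSq_jacobian hw h'w).add (integrable_trace_jacobian_mul_self hw h'w)
  refine (key.const_mul 2⁻¹).congr (.of_forall fun x => ?_)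
  simp only [Pi.add_apply, ← two_mul_frobSq_symPart]
  ring

theorem integral_trace_jacobian_mul_self (hw : LipschitzWith K w) (h'w : HasCompactSupport w) :
    ∫ x, trace (jacobian w x * jacobian w x) = ∫ x, trace (jacobian w x) ^ 2 := by
  have integrable := integrable_jacobian_mul_jacobian hw h'w
  have swap (i j : ι) : ∫ x, jacobian w x i j * jacobian w x j i =
      ∫ x, jacobian w x i i * jacobian w x j j :=
    integral_lineDeriv_mul_lineDeriv_comm (lipschitzWith_apply hw i) (hasCompactSupport_apply h'w i)
      (lipschitzWith_apply hw j) (hasCompactSupport_apply h'w j) _ _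
  calc ∫ x, trace (jacobian w x * jacobian w x)
      = ∑ i, ∑ j, ∫ x, jacobian w x i j * jacobian w x j i := by
        simp only [trace, diag_apply, Matrix.mul_apply]
        rw [integral_finsetSum _ fun i _ => integrable_finsetSum _ fun j _ => integrable i j j i]
        exact Finset.sum_congr rfl fun i _ => integral_finsetSum _ fun j _ => integrable i j j i
    _ = ∑ i, ∑ j, ∫ x, jacobian w x i i * jacobian w x j j := by simp only [swap]
    _ = ∫ x, trace (jacobian w x) ^ 2 := by
        simp only [trace, diag_apply, sq, Finset.sum_mul_sum]
        rw [integral_finsetSum _ fun i _ => integrable_finsetSum _ fun j _ => integrable i i j j]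
        exact Finset.sum_congr rfl fun i _ =>
          (integral_finsetSum _ fun j _ => integrable i i j j).symm

theorem korn_whole_space (hw : LipschitzWith K w) (h'w : HasCompactSupport w) :
    ∫ x, frobSq (jacobian w x) ≤ 2 * ∫ x, frobSq (symPart (jacobian w x)) := by
  have trace_nonneg : 0 ≤ ∫ x, trace (jacobian w x * jacobian w x) := by
    rw [integral_trace_jacobian_mul_self hw h'w]
    exact integral_nonneg fun x => sq_nonneg _
  rw [← integral_const_mul]
  simp only [two_mul_frobSq_symPart]
  rw [integral_add (integrable_frobSq_jacobian hw h'w) (integrable_trace_jacobian_mul_self hw h'w)]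
  exact le_add_of_nonneg_right trace_nonneg

end WholeSpace

section DiagonalScaling

theorem isClosedEmbedding_mul_left {M : Type*} [Monoid M] [TopologicalSpace M] [ContinuousMul M]
    {a : M} (ha : IsUnit a) : IsClosedEmbedding (a * ·) :=
  (Homeomorph.smul ha.unit).isClosedEmbedding

variable {ι : Type*} {d : ι → ℝ}

theorem hasCompactSupport_diagPullback (hd : IsUnit d) {w : (ι → ℝ) → ι → ℝ}
    (h'w : HasCompactSupport w) : HasCompactSupport (diagPullback d w) :=
  (h'w.comp_isClosedEmbedding (isClosedEmbedding_mul_left hd)).mul_left (f := fun _ => d)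

variable [Fintype ι]

theorem map_mul_left_volume_pi (hd : IsUnit d) :
    Measure.map (d * ·) (volume : Measure (ι → ℝ)) =
      ENNReal.ofReal |∏ i, d i|⁻¹ • volume := by
  classical
  have hdet : (diagonal d).det ≠ 0 := by
    rw [det_diagonal]
    exact Finset.prod_ne_zero_iff.mpr fun i _ => (Pi.isUnit_iff.mp hd i).ne_zero
  have coe_toLin : ⇑(toLin' (diagonal d)) = (d * ·) := by
    ext x i
    rw [toLin'_apply, mulVec_diagonal, Pi.mul_apply]
  rw [← coe_toLin, Real.map_matrix_volume_pi_eq_smul_volume_pi hdet, det_diagonal, abs_inv]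

theorem integrable_comp_mul_left (hd : IsUnit d) {F : (ι → ℝ) → ℝ} (hF : Integrable F) :
    Integrable fun x => F (d * x) := by
  refine (isClosedEmbedding_mul_left hd).measurableEmbedding.integrable_map_iff.mp ?_
  rw [map_mul_left_volume_pi hd]
  exact hF.smul_measure ENNReal.ofReal_ne_top

theorem setIntegral_comp_mul_left (hd : IsUnit d) (F : (ι → ℝ) → ℝ) (s : Set (ι → ℝ)) :
    ∫ x in (d * ·) ⁻¹' s, F (d * x) = |∏ i, d i|⁻¹ * ∫ x in s, F x := by
  rw [← (isClosedEmbedding_mul_left hd).measurableEmbedding.setIntegral_map,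
    map_mul_left_volume_pi hd, Measure.restrict_smul, integral_smul_measure,
    ENNReal.toReal_ofReal (by positivity), smul_eq_mul]

theorem exists_lipschitzWith_diagPullback (d : ι → ℝ) {w : (ι → ℝ) → ι → ℝ} {K : ℝ≥0}
    (hw : LipschitzWith K w) : ∃ K', LipschitzWith K' (diagPullback d w) :=
  have hd := (ContinuousLinearMap.mul ℝ (ι → ℝ) d).lipschitz
  ⟨_, hd.comp (hw.comp hd)⟩

end DiagonalScaling

section HalfSpaceExtension

theorem integral_eq_setIntegral_neg_add_setIntegral_pos {ι : Type*} [Fintype ι] (n : ι)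
    {F : (ι → ℝ) → ℝ} (hF : Integrable F) :
    ∫ x, F x = (∫ x in {x | x n < 0}, F x) + ∫ x in {x | 0 < x n}, F x := by
  have compl_ae_eq : ({x : ι → ℝ | x n < 0}ᶜ : Set (ι → ℝ)) =ᵐ[volume] {x | 0 < x n} := by
    filter_upwards [Measure.ae_eval_ne (μ := fun _ : ι => volume) n 0] with x hx
    exact propext (not_lt.trans hx.symm.le_iff_lt)
  rw [← setIntegral_congr_set compl_ae_eq,
    integral_add_compl (measurableSet_lt (measurable_pi_apply n) measurable_const) hF]

variable {ι : Type*} [DecidableEq ι] (n : ι) {l : ℝ}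

/-- The diagonal of the linear map `(y, z) ↦ (y, -l z)`, where `z` is the `n`-th coordinate. -/
def flipScale (l : ℝ) : ι → ℝ := Function.update 1 n (-l)

/-- The field `(y, z) ↦ (2 w'(y, -z) - w'(y, -3z), -2 wₙ(y, -z) + 3 wₙ(y, -3z))`, where `wₙ` is the
`n`-th component of `w` and `w'` stands for the others; it extends `w` from `z < 0` to `z ≥ 0`. -/
noncomputable def reflectedField (w : (ι → ℝ) → ι → ℝ) : (ι → ℝ) → ι → ℝ :=
  (2 : ℝ) • diagPullback (flipScale n 1) w - diagPullback (flipScale n 3) w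

open scoped Classical in
/-- The extension by reflection of `w` restricted to the half-space `xₙ < 0`. -/
noncomputable def halfSpaceExtension (w : (ι → ℝ) → ι → ℝ) : (ι → ℝ) → ι → ℝ :=
  {x : ι → ℝ | x n < 0}.piecewise w (reflectedField n w)

theorem isUnit_flipScale (hl : l ≠ 0) : IsUnit (flipScale n l) :=
  Pi.isUnit_iff.mpr fun i => by
    rcases eq_or_ne i n with rfl | hi
    · simpa [flipScale] using hl
    · simp [flipScale, hi]

theorem abs_flipScale_le (hl : 1 ≤ l) (i : ι) : |flipScale n l i| ≤ l := by
  rcases eq_or_ne i n with rfl | hi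
  · simp [flipScale, abs_of_nonneg (zero_le_one.trans hl)]
  · simpa [flipScale, hi] using hl

theorem prod_flipScale [Fintype ι] (l : ℝ) : ∏ i, flipScale n l i = -l := by
  simp [flipScale, Finset.prod_update_of_mem]

theorem preimage_flipScale_mul (hl : 0 < l) :
    (flipScale n l * ·) ⁻¹' {x : ι → ℝ | x n < 0} = {x | 0 < x n} := by
  ext x
  simp [flipScale, hl]

theorem flipScale_mul_eq_self (l : ℝ) {x : ι → ℝ} (hx : x n = 0) : flipScale n l * x = x := by
  ext i
  rcases eq_or_ne i n with rfl | hi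
  · simp [hx]
  · simp [flipScale, hi]

theorem eqOn_reflectedField (w : (ι → ℝ) → ι → ℝ) :
    EqOn w (reflectedField n w) {x | x n = 0} := by
  intro x hx
  have weights : (2 : ℝ) • flipScale n 1 - flipScale n 3 = 1 := by
    ext i
    rcases eq_or_ne i n with rfl | hi
    · norm_num [flipScale]
    · norm_num [flipScale, hi]
  simp only [reflectedField, diagPullback, Pi.sub_apply, Pi.smul_apply,
    flipScale_mul_eq_self n _ hx, ← smul_mul_assoc, ← sub_mul, weights, one_mul]

variable {w : (ι → ℝ) → ι → ℝ}

theorem hasCompactSupport_reflectedField (h'w : HasCompactSupport w) :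
    HasCompactSupport (reflectedField n w) :=
  ((hasCompactSupport_diagPullback (isUnit_flipScale n one_ne_zero) h'w).smul_left
    (f := fun _ => (2 : ℝ))).sub
    (hasCompactSupport_diagPullback (isUnit_flipScale n three_ne_zero) h'w)

theorem hasCompactSupport_halfSpaceExtension (h'w : HasCompactSupport w) :
    HasCompactSupport (halfSpaceExtension n w) := by
  refine HasCompactSupport.intro
    (h'w.isCompact.union (hasCompactSupport_reflectedField n h'w).isCompact) fun x hx => ?_
  rw [mem_union, not_or] at hx
  rw [halfSpaceExtension, piecewise, image_eq_zero_of_notMem_tsupport hx.1,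
    image_eq_zero_of_notMem_tsupport hx.2, ite_self]

theorem jacobian_halfSpaceExtension_of_neg [Finite ι] {x : ι → ℝ} (hx : x n < 0) :
    jacobian (halfSpaceExtension n w) x = jacobian w x := by
  refine jacobian_congr_of_eventuallyEq ?_
  filter_upwards [(isOpen_lt (continuous_apply n) continuous_const).mem_nhds hx] with y hy
  exact piecewise_eq_of_mem _ _ _ hy

theorem jacobian_halfSpaceExtension_of_pos [Finite ι] {x : ι → ℝ} (hx : 0 < x n) :
    jacobian (halfSpaceExtension n w) x = jacobian (reflectedField n w) x := by
  refine jacobian_congr_of_eventuallyEq ?_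
  filter_upwards [(isOpen_lt continuous_const (continuous_apply n)).mem_nhds hx] with y hy
  exact piecewise_eq_of_notMem _ _ _ hy.not_gt

variable [Fintype ι] {K : ℝ≥0}

theorem exists_lipschitzWith_reflectedField (hw : LipschitzWith K w) :
    ∃ K', LipschitzWith K' (reflectedField n w) := by
  obtain ⟨K₁, hK₁⟩ := exists_lipschitzWith_diagPullback (flipScale n 1) hw
  obtain ⟨K₃, hK₃⟩ := exists_lipschitzWith_diagPullback (flipScale n 3) hw
  exact ⟨_, ((lipschitzWith_smul (2 : ℝ)).comp hK₁).sub hK₃⟩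

theorem exists_lipschitzWith_halfSpaceExtension (hw : LipschitzWith K w) :
    ∃ K', LipschitzWith K' (halfSpaceExtension n w) := by
  obtain ⟨L, hL⟩ := exists_lipschitzWith_reflectedField n hw
  have frontier_subset : frontier {x : ι → ℝ | x n < 0} ⊆ {x | x n = 0} :=
    frontier_lt_subset_eq (continuous_apply n) continuous_const
  exact ⟨max K L, lipschitzWith_piecewise (hw.weaken (le_max_left K L))
    (hL.weaken (le_max_right K L)) ((eqOn_reflectedField n w).mono frontier_subset)⟩

theorem frobSq_symPart_jacobian_diagPullback_flipScale_le (hl : 1 ≤ l) (w : (ι → ℝ) → ι → ℝ)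
    (x : ι → ℝ) :
    frobSq (symPart (jacobian (diagPullback (flipScale n l) w) x)) ≤
      l ^ 4 * frobSq (symPart (jacobian w (flipScale n l * x))) := by
  rw [jacobian_diagPullback, symPart_diagonal_mul_mul_diagonal]
  exact frobSq_diagonal_mul_mul_diagonal_le (abs_flipScale_le n hl) _

-- `8 = 2 · 2² · 1⁴` and `162 = 2 · 3⁴`: the factor `2` comes from `frobSq_sub_le`.
theorem ae_frobSq_symPart_jacobian_reflectedField_le (hw : LipschitzWith K w) :
    ∀ᵐ x, frobSq (symPart (jacobian (reflectedField n w) x)) ≤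
      8 * frobSq (symPart (jacobian w (flipScale n 1 * x))) +
        162 * frobSq (symPart (jacobian w (flipScale n 3 * x))) := by
  obtain ⟨K₁, hK₁⟩ := exists_lipschitzWith_diagPullback (flipScale n 1) hw
  obtain ⟨K₃, hK₃⟩ := exists_lipschitzWith_diagPullback (flipScale n 3) hw
  filter_upwards [hK₁.ae_differentiableAt, hK₃.ae_differentiableAt] with x hx₁ hx₃
  have bound₁ := frobSq_symPart_jacobian_diagPullback_flipScale_le n le_rfl w x
  have bound₃ := frobSq_symPart_jacobian_diagPullback_flipScale_le n
    (Nat.one_le_ofNat (α := ℝ) (n := 3)) w x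
  rw [reflectedField, jacobian_sub (hx₁.const_smul 2) hx₃, jacobian_const_smul, symPart_sub,
    symPart_smul]
  refine (frobSq_sub_le _ _).trans ?_
  rw [frobSq_smul]
  linarith

theorem setIntegral_comp_flipScale_mul (hl : 0 < l) (F : (ι → ℝ) → ℝ) :
    ∫ x in {x | 0 < x n}, F (flipScale n l * x) = l⁻¹ * ∫ x in {x | x n < 0}, F x := by
  rw [← preimage_flipScale_mul n hl, setIntegral_comp_mul_left (isUnit_flipScale n hl.ne'),
    prod_flipScale, abs_neg, abs_of_pos hl]

theorem setIntegral_frobSq_symPart_jacobian_reflectedField_le (hw : LipschitzWith K w)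
    (h'w : HasCompactSupport w) :
    ∫ x in {x | 0 < x n}, frobSq (symPart (jacobian (reflectedField n w) x)) ≤
      62 * ∫ x in {x | x n < 0}, frobSq (symPart (jacobian w x)) := by
  obtain ⟨L, hL⟩ := exists_lipschitzWith_reflectedField n hw
  have integrable_S := integrable_frobSq_symPart_jacobian hw h'w
  have integrable_flip {l : ℝ} (hl : l ≠ 0) (c : ℝ) : Integrable fun x =>
      c * frobSq (symPart (jacobian w (flipScale n l * x))) :=
    (integrable_comp_mul_left (isUnit_flipScale n hl) integrable_S).const_mul c
  have integrable₁ := (integrable_flip one_ne_zero 8).integrableOn (s := {x | 0 < x n})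
  have integrable₃ := (integrable_flip three_ne_zero 162).integrableOn (s := {x | 0 < x n})
  calc ∫ x in {x | 0 < x n}, frobSq (symPart (jacobian (reflectedField n w) x))
      ≤ ∫ x in {x | 0 < x n}, (8 * frobSq (symPart (jacobian w (flipScale n 1 * x))) +
          162 * frobSq (symPart (jacobian w (flipScale n 3 * x)))) :=
        setIntegral_mono_ae (integrable_frobSq_symPart_jacobian hL
          (hasCompactSupport_reflectedField n h'w)).integrableOn (integrable₁.add integrable₃)
          (ae_frobSq_symPart_jacobian_reflectedField_le n hw)
    _ = 62 * ∫ x in {x | x n < 0}, frobSq (symPart (jacobian w x)) := by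
        rw [integral_add integrable₁ integrable₃, integral_const_mul, integral_const_mul,
          setIntegral_comp_flipScale_mul n one_pos fun x => frobSq (symPart (jacobian w x)),
          setIntegral_comp_flipScale_mul n three_pos fun x => frobSq (symPart (jacobian w x))]
        ring

theorem integral_frobSq_symPart_jacobian_halfSpaceExtension_le (hw : LipschitzWith K w)
    (h'w : HasCompactSupport w) :
    ∫ x, frobSq (symPart (jacobian (halfSpaceExtension n w) x)) ≤
      63 * ∫ x in {x | x n < 0}, frobSq (symPart (jacobian w x)) := by
  obtain ⟨L, hL⟩ := exists_lipschitzWith_halfSpaceExtension n hw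
  have lower : ∫ x in {x | x n < 0}, frobSq (symPart (jacobian (halfSpaceExtension n w) x)) =
      ∫ x in {x | x n < 0}, frobSq (symPart (jacobian w x)) :=
    setIntegral_congr_fun (measurableSet_lt (measurable_pi_apply n) measurable_const)
      fun x hx => by simp only [jacobian_halfSpaceExtension_of_neg n hx]
  have upper : ∫ x in {x | 0 < x n}, frobSq (symPart (jacobian (halfSpaceExtension n w) x)) =
      ∫ x in {x | 0 < x n}, frobSq (symPart (jacobian (reflectedField n w) x)) :=
    setIntegral_congr_fun (measurableSet_lt measurable_const (measurable_pi_apply n))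
      fun x hx => by simp only [jacobian_halfSpaceExtension_of_pos n hx]
  rw [integral_eq_setIntegral_neg_add_setIntegral_pos n (integrable_frobSq_symPart_jacobian hL
    (hasCompactSupport_halfSpaceExtension n h'w)), lower, upper]
  linarith [setIntegral_frobSq_symPart_jacobian_reflectedField_le n hw h'w]

end HalfSpaceExtension

theorem korn_half_space_general {ι : Type*} [Fintype ι] [DecidableEq ι] (n : ι)
    {w : (ι → ℝ) → ι → ℝ} {K : ℝ≥0} (hw : LipschitzWith K w) (h'w : HasCompactSupport w) :
    ∫ x in {x | x n < 0}, frobSq (jacobian w x) ≤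
      126 * ∫ x in {x | x n < 0}, frobSq (symPart (jacobian w x)) := by
  obtain ⟨L, hL⟩ := exists_lipschitzWith_halfSpaceExtension n hw
  have h'ext := hasCompactSupport_halfSpaceExtension n h'w
  calc ∫ x in {x | x n < 0}, frobSq (jacobian w x)
      = ∫ x in {x | x n < 0}, frobSq (jacobian (halfSpaceExtension n w) x) :=
        setIntegral_congr_fun (measurableSet_lt (measurable_pi_apply n) measurable_const)
          fun x hx => by simp only [jacobian_halfSpaceExtension_of_neg n hx]
    _ ≤ ∫ x, frobSq (jacobian (halfSpaceExtension n w) x) :=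
        setIntegral_le_integral (integrable_frobSq_jacobian hL h'ext)
          (.of_forall fun _ => frobSq_nonneg _)
    _ ≤ 2 * ∫ x, frobSq (symPart (jacobian (halfSpaceExtension n w) x)) :=
        korn_whole_space hL h'ext
    _ ≤ 126 * ∫ x in {x | x n < 0}, frobSq (symPart (jacobian w x)) := by
        linarith [integral_frobSq_symPart_jacobian_halfSpaceExtension_le n hw h'w]

theorem jacobian_apply_eq_pd {w : (Fin 3 → ℝ) → Fin 3 → ℝ} (hw : Differentiable ℝ w)
    (x : Fin 3 → ℝ) (i j : Fin 3) : jacobian w x i j = pd j (fun y => w y i) x :=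
  (differentiable_pi.mp hw i x).lineDeriv_eq_fderiv

/-- Korn inequality in the half-space: there is `C > 0` such that for every `C¹` compactly
supported vector field `w : ℝ³ → ℝ³`,
`∫_{x₃<0} |∇w|² ≤ C ∫_{x₃<0} |Sw|²` with `(Sw)_{ij} = ½(∂ⱼwᵢ + ∂ᵢwⱼ)`. -/
theorem korn_half_space :
    ∃ C : ℝ, 0 < C ∧
      ∀ w : (Fin 3 → ℝ) → Fin 3 → ℝ, ContDiff ℝ 1 w → HasCompactSupport w →
        (∫ x in lowerHalf, ∑ i : Fin 3, ∑ j : Fin 3, (pd j (fun y => w y i) x) ^ 2)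
          ≤ C * ∫ x in lowerHalf, ∑ i : Fin 3, ∑ j : Fin 3,
              ((pd j (fun y => w y i) x + pd i (fun y => w y j) x) / 2) ^ 2 := by
  refine ⟨126, by norm_num, fun w hw h'w => ?_⟩
  obtain ⟨K, hK⟩ := hw.lipschitzWith_of_hasCompactSupport h'w one_ne_zero
  have jacobian_eq := jacobian_apply_eq_pd (hw.differentiable one_ne_zero)
  simpa only [lowerHalf, frobSq, symPart_apply, jacobian_eq] using korn_half_space_general 2 hK h'w
end

section
/- Let ε > 0, γ > 0, τ ∈ ℝ and r ≥ 0. Set w = (γ + r) + iτ ∈ ℂ and let √w denote the principal square root of w (the one with positive real part). Then (γ + |τ| + r)^{1/2} · ∫_{−∞}^{0} | exp( √w · z / √ε ) |² dz ≤ √ε. -/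
open MeasureTheory

/-!
Since `‖exp (a z)‖ ^ 2 = exp (2 Re a · z)`, the integral equals `√ε / (2 Re √w)`. From
`Re √w = √((‖w‖ + Re w) / 2)` one gets the exact value `√(ε / 2)` for the product of the integral
with `√(‖w‖ + Re w)`, and `|Im w| ≤ ‖w‖` turns this identity into the bound.
-/

lemma norm_add_re_pos_of_mem_slitPlane {w : ℂ} (hw : w ∈ Complex.slitPlane) :
    0 < ‖w‖ + w.re := by
  rcases Complex.mem_slitPlane_iff.mp hw with hre | him
  · positivity
  · have : |w.re| < ‖w‖ := Complex.abs_re_lt_norm.mpr him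
    linarith [neg_abs_le w.re]

lemma re_cpow_inv_two_pos_of_mem_slitPlane {w : ℂ} (hw : w ∈ Complex.slitPlane) :
    0 < (w ^ (2⁻¹ : ℂ)).re := by
  rw [Complex.cpow_inv_two_re]
  exact Real.sqrt_pos.mpr (half_pos (norm_add_re_pos_of_mem_slitPlane hw))

lemma sqrt_norm_add_re_eq_sqrt_two_mul_re_cpow_inv_two (w : ℂ) :
    √(‖w‖ + w.re) = √2 * (w ^ (2⁻¹ : ℂ)).re := by
  rw [Complex.cpow_inv_two_re, ← Real.sqrt_mul zero_le_two, mul_div_cancel₀ _ two_ne_zero]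

lemma norm_cexp_mul_ofReal_sq (a : ℂ) (z : ℝ) :
    ‖Complex.exp (a * z)‖ ^ 2 = Real.exp (2 * a.re * z) := by
  rw [Complex.norm_exp, Complex.re_mul_ofReal, ← Real.exp_nat_mul, Nat.cast_ofNat, mul_assoc]

lemma integral_norm_cexp_mul_sq_Iio {a : ℂ} (ha : 0 < a.re) (c : ℝ) :
    ∫ z : ℝ in Set.Iio c, ‖Complex.exp (a * z)‖ ^ 2 = Real.exp (2 * a.re * c) / (2 * a.re) := by
  simp_rw [norm_cexp_mul_ofReal_sq]
  rw [← integral_Iic_eq_integral_Iio, integral_exp_mul_Iic (by positivity)]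

lemma sqrt_norm_add_re_mul_integral_norm_cexp_sq {w : ℂ} (hw : w ∈ Complex.slitPlane) {ε : ℝ}
    (hε : 0 < ε) :
    √(‖w‖ + w.re) *
        ∫ z in Set.Iio (0 : ℝ), ‖Complex.exp (w ^ (2⁻¹ : ℂ) * (z : ℂ) / (√ε : ℂ))‖ ^ 2
      = √(ε / 2) := by
  have hs : 0 < (w ^ (2⁻¹ : ℂ)).re := re_cpow_inv_two_pos_of_mem_slitPlane hw
  have hrate : 0 < (w ^ (2⁻¹ : ℂ) / (√ε : ℂ)).re := by
    rw [Complex.div_ofReal_re]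
    positivity
  simp_rw [mul_div_right_comm]
  rw [integral_norm_cexp_mul_sq_Iio hrate, Complex.div_ofReal_re, mul_zero, Real.exp_zero,
    sqrt_norm_add_re_eq_sqrt_two_mul_re_cpow_inv_two, Real.sqrt_div' _ zero_le_two]
  generalize (w ^ (2⁻¹ : ℂ)).re = s at hs ⊢
  field_simp
  exact Real.sq_sqrt zero_le_two

theorem heat_resolvent_bound_general {w : ℂ} (hw : w ∈ Complex.slitPlane) {ε : ℝ} (hε : 0 < ε) :
    √(w.re + |w.im|) *
        ∫ z in Set.Iio (0 : ℝ), ‖Complex.exp (w ^ (2⁻¹ : ℂ) * (z : ℂ) / (√ε : ℂ))‖ ^ 2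
      ≤ √(ε / 2) := by
  rw [← sqrt_norm_add_re_mul_integral_norm_cexp_sq hw hε, add_comm w.re]
  gcongr
  exact Complex.abs_im_le_norm w

/-- The key resolvent bound behind Lemma 9.4 of the paper: with `w = (γ + r) + iτ` and `√w`
the principal square root (the one with positive real part),
`(γ + |τ| + r)^{1/2} ∫_{−∞}^{0} |exp(√w z/√ε)|² dz ≤ √ε`. -/
theorem heat_resolvent_bound (ε γ τ r : ℝ) (hε : 0 < ε) (hγ : 0 < γ) (hr : 0 ≤ r) :
    Real.sqrt (γ + |τ| + r) *
        ∫ z in Set.Iio (0 : ℝ),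
          ‖Complex.exp ((((γ + r : ℝ) : ℂ) + (τ : ℂ) * Complex.I) ^ ((1 : ℂ) / 2)
              * (z : ℂ) / ((Real.sqrt ε : ℝ) : ℂ))‖ ^ 2
      ≤ Real.sqrt ε := by
  have hw : (⟨γ + r, τ⟩ : ℂ) ∈ Complex.slitPlane := .inl (add_pos_of_pos_of_nonneg hγ hr)
  rw [add_right_comm, ← Complex.mk_eq_add_mul_I, one_div]
  exact (heat_resolvent_bound_general hw hε).trans (Real.sqrt_le_sqrt (half_le_self hε.le))
end

section
/- Let m, c₀, M > 0. There exist γ₀ ≥ 1 and C > 0, depending only on m, c₀, M, with the following property. Let ε ∈ (0,1], γ ≥ γ₀, τ ∈ ℝ, ξ = (ξ₁,ξ₂) ∈ ℝ², and set ⟨ζ^ε⟩ = (γ² + τ² + ε²|ξ|⁴)^{1/4}. Let a₀ : (−∞,0] → ℝ and a = (a_{ij}) : (−∞,0] → Sym₃(ℝ) be continuously differentiable with, for all z ≤ 0: a₀(z) ≥ m, a₃₃(z) ≥ m, |a₀(z)| + |a(z)| + √ε(|a₀′(z)| + |a′(z)|) ≤ M, and ηᵀ a(z) η ≥ c₀|η|²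 for all η ∈ ℝ³. Let Ω : (−∞,0] → ℂ be twice continuously differentiable and F : (−∞,0] → ℂ continuous, with Ω, Ω′, F square-integrable on (−∞,0) and Ω(z), Ω′(z) → 0 as z → −∞, satisfying for z < 0 the equation (a₀/a₃₃)(γ + iτ) Ω + Σ_{1≤i,j≤2} (a_{ij}/a₃₃) ε ξ_i ξ_j Ω − 2i Σ_{k=1}^{2} (a_{k3}/a₃₃) ε ξ_k Ω′ = ε Ω″ + R + F, where R = i ε Σ_{k=1}^{2} (a_{3k}′/a₃₃) ξ_k Ω + ε (a₃₃′/a₃₃) Ω′. Then ⟨ζ^ε⟩ ∫_{−∞}^{0} |Ω|² dz + (ε/⟨ζ^ε⟩) ∫_{−∞}^{0} |Ω′|² dz ≤ C ( √ε |Ω(0)|² + ⟨ζ^ε⟩^{−3} ∫_{−∞}^{0} |F|² dz ). -/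
open MeasureTheory

/-! Multiplied by `a₃₃`, the equation is in divergence form: the flux `Φ = a₃₃ √ε Ω′ + i b Ω`, with
`b = ∑ₖ a₃ₖ √ε ξₖ`, satisfies `√ε Φ′ = (a₀ (γ + iτ) + ∑ᵢⱼ aᵢⱼ ε ξᵢ ξⱼ) Ω - i b √ε Ω′ - a₃₃ F`, in
which no derivative of a coefficient appears. Differentiate the quadratic functional
`Re ⟨(1 + i sgn τ) Ω, Φ⟩ - κ |Φ|²`. In its first term the multiplier turns `γ + iτ` into `γ + |τ|`,
and ellipticity of `a` controls the rest, so that its derivative dominates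
`⟨ζ^ε⟩² |Ω|² + ε |Ω′|²`; for `κ` a small multiple of `⟨ζ^ε⟩⁻¹` the second term does not spoil this,
and it makes the functional at `z = 0` at most `κ⁻¹ |Ω(0)|²`, whatever the boundary flux is.
Integration over `z < 0` gives the estimate. -/

open Set Filter Topology ComplexConjugate InnerProductSpace

/-- The coefficients at one point of the model equation, after multiplication by `a₃₃` and
rescaling of all derivatives by `√ε`: with `ξ^ε = √ε ξ`, these are `time = a₀`, `normal = a₃₃`,
`cross = ∑ₖ a₃ₖ ξₖ^ε` and `tangential = ∑ᵢⱼ aᵢⱼ ξᵢ^ε ξⱼ^ε`. -/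
structure ParabolicSymbol where
  /-- The coefficient of the Fourier–Laplace variable `γ + iτ`. -/
  time : ℝ
  /-- The coefficient of the second normal derivative. -/
  normal : ℝ
  /-- The coefficient of the mixed tangential and normal derivatives. -/
  cross : ℝ
  /-- The coefficient of the tangential derivatives. -/
  tangential : ℝ

namespace ParabolicSymbol

/-- Ellipticity with constant `c` and bounds with constant `M`, at a tangential frequency of
length `X`. -/
structure IsElliptic (S : ParabolicSymbol) (c M X : ℝ) : Prop where
  le_time : c ≤ S.time
  abs_time_le : |S.time| ≤ M
  abs_normal_le : |S.normal| ≤ M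
  abs_cross_le : |S.cross| ≤ M * X
  abs_tangential_le : |S.tangential| ≤ M * X ^ 2
  coercive (s t : ℝ) :
    c * (s ^ 2 * X ^ 2 + t ^ 2) ≤ S.tangential * s ^ 2 + 2 * S.cross * s * t + S.normal * t ^ 2

/-- The conormal flux `a₃₃ v + i b u`, where `v` stands for `√ε u′`. -/
noncomputable def flux (S : ParabolicSymbol) (u v : ℂ) : ℂ :=
  S.normal * v + Complex.I * S.cross * u

/-- The value that the model equation, in divergence form, assigns to `√ε` times the derivative
of the flux, where `v` stands for `√ε u′` and `f` for the source term. -/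
noncomputable def fluxRate (S : ParabolicSymbol) (γ τ : ℝ) (u v f : ℂ) : ℂ :=
  (S.time * (γ + τ * Complex.I) + S.tangential) * u - Complex.I * S.cross * v - S.normal * f

/-- The Hermitian form of the second-order part, evaluated on the gradient `(i ξ^ε u, v)`. -/
noncomputable def hermitianForm (S : ParabolicSymbol) (u v : ℂ) : ℝ :=
  S.tangential * ‖u‖ ^ 2 + 2 * S.cross * (conj u * v).im + S.normal * ‖v‖ ^ 2

theorem inner_mul_fluxRate_add_inner_mul_flux (S : ParabolicSymbol) (γ τ : ℝ) (θ u v f : ℂ) :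
    ⟪θ * u, S.fluxRate γ τ u v f⟫_ℝ + ⟪θ * v, S.flux u v⟫_ℝ =
      S.time * (θ.re * γ + θ.im * τ) * ‖u‖ ^ 2 + θ.re * S.hermitianForm u v
        - S.normal * ⟪θ * u, f⟫_ℝ := by
  simp only [hermitianForm, flux, fluxRate, Complex.inner, Complex.sq_norm, Complex.normSq_apply,
    Complex.add_re, Complex.sub_re, Complex.mul_re, Complex.add_im, Complex.sub_im, Complex.mul_im,
    Complex.conj_re, Complex.conj_im, Complex.ofReal_re, Complex.ofReal_im, Complex.I_re,
    Complex.I_im]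
  ring

namespace IsElliptic

variable {S : ParabolicSymbol} {c M X γ τ : ℝ}

theorem bound_nonneg (hS : S.IsElliptic c M X) : 0 ≤ M :=
  (abs_nonneg _).trans hS.abs_time_le

theorem bound_pos (hS : S.IsElliptic c M X) (hc : 0 < c) : 0 < M :=
  hc.trans_le (hS.le_time.trans ((le_abs_self _).trans hS.abs_time_le))

theorem le_normal (hS : S.IsElliptic c M X) : c ≤ S.normal := by
  simpa using hS.coercive 0 1

theorem le_hermitianForm (hS : S.IsElliptic c M X) (u v : ℂ) :
    c * (X ^ 2 * ‖u‖ ^ 2 + ‖v‖ ^ 2) ≤ S.hermitianForm u v := by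
  have real_part := hS.coercive (-u.im) v.re
  have imaginary_part := hS.coercive u.re v.im
  simp only [hermitianForm, Complex.sq_norm, Complex.normSq_apply, Complex.mul_im, Complex.conj_re,
    Complex.conj_im]
  linarith

theorem norm_flux_le (hS : S.IsElliptic c M X) (u v : ℂ) :
    ‖S.flux u v‖ ≤ M * (‖v‖ + X * ‖u‖) :=
  calc ‖S.flux u v‖ ≤ |S.normal| * ‖v‖ + |S.cross| * ‖u‖ :=
        (norm_add_le _ _).trans_eq (by simp)
    _ ≤ M * ‖v‖ + M * X * ‖u‖ := by gcongr; exacts [hS.abs_normal_le, hS.abs_cross_le]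
    _ = M * (‖v‖ + X * ‖u‖) := by ring

theorem norm_fluxRate_le (hS : S.IsElliptic c M X) (u v f : ℂ) :
    ‖S.fluxRate γ τ u v f‖ ≤
      M * ((‖(γ + τ * Complex.I : ℂ)‖ + X ^ 2) * ‖u‖ + X * ‖v‖ + ‖f‖) :=
  calc ‖S.fluxRate γ τ u v f‖
      ≤ ‖S.time * (γ + τ * Complex.I : ℂ) + S.tangential‖ * ‖u‖ + |S.cross| * ‖v‖
          + |S.normal| * ‖f‖ :=
        (norm_sub_le _ _).trans (add_le_add (norm_sub_le _ _) le_rfl) |>.trans_eq (by simp)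
    _ ≤ (|S.time| * ‖(γ + τ * Complex.I : ℂ)‖ + |S.tangential|) * ‖u‖ + |S.cross| * ‖v‖
          + |S.normal| * ‖f‖ := by
        gcongr; exact (norm_add_le _ _).trans_eq (by simp)
    _ ≤ (M * ‖(γ + τ * Complex.I : ℂ)‖ + M * X ^ 2) * ‖u‖ + M * X * ‖v‖ + M * ‖f‖ := by
        gcongr
        exacts [hS.abs_time_le, hS.abs_tangential_le, hS.abs_cross_le, hS.abs_normal_le]
    _ = M * ((‖(γ + τ * Complex.I : ℂ)‖ + X ^ 2) * ‖u‖ + X * ‖v‖ + ‖f‖) := by ring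

end IsElliptic

end ParabolicSymbol

section Weight

variable {L X γ τ : ℝ}

theorem norm_add_mul_I_le_sq_of_pow_four_eq (hL : L ^ 4 = γ ^ 2 + τ ^ 2 + X ^ 4) :
    ‖(γ + τ * Complex.I : ℂ)‖ ≤ L ^ 2 := by
  rw [Complex.norm_add_mul_I]
  exact Real.sqrt_le_iff.2 ⟨by positivity, by nlinarith [sq_nonneg (X ^ 2)]⟩

theorem sq_le_sq_of_pow_four_eq (hL : L ^ 4 = γ ^ 2 + τ ^ 2 + X ^ 4) : X ^ 2 ≤ L ^ 2 :=
  le_of_sq_le_sq (by nlinarith [sq_nonneg γ, sq_nonneg τ]) (by positivity)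

theorem sq_le_add_abs_add_sq_of_pow_four_eq (hγ : 0 ≤ γ) (hL : L ^ 4 = γ ^ 2 + τ ^ 2 + X ^ 4) :
    L ^ 2 ≤ γ + |τ| + X ^ 2 := by
  refine le_of_sq_le_sq ?_ (by positivity)
  calc (L ^ 2) ^ 2 = γ ^ 2 + |τ| ^ 2 + (X ^ 2) ^ 2 := by rw [sq_abs]; linarith
    _ ≤ γ ^ 2 + |τ| ^ 2 + (X ^ 2) ^ 2 + 2 * (γ * |τ| + γ * X ^ 2 + |τ| * X ^ 2) :=
        le_add_of_nonneg_right (by positivity)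
    _ = (γ + |τ| + X ^ 2) ^ 2 := by ring

end Weight

/-- The multiplier `1 + i sgn τ`, whose inner product with `γ + iτ` is `γ + |τ|`. -/
noncomputable def multiplier (τ : ℝ) : ℂ :=
  ⟨1, SignType.sign τ⟩

theorem norm_multiplier_le_two (τ : ℝ) : ‖multiplier τ‖ ≤ 2 := by
  have abs_sign_le_one : |(SignType.sign τ : ℝ)| ≤ 1 := by
    rcases SignType.sign τ with _ | _ | _ <;> simp
  calc ‖multiplier τ‖ ≤ |(1 : ℝ)| + |(SignType.sign τ : ℝ)| := Complex.norm_le_abs_re_add_abs_im _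
    _ ≤ 2 := by rw [abs_one]; linarith

theorem abs_inner_multiplier_mul_le (τ : ℝ) (u w : ℂ) :
    |⟪multiplier τ * u, w⟫_ℝ| ≤ 2 * ‖u‖ * ‖w‖ :=
  calc |⟪multiplier τ * u, w⟫_ℝ| ≤ ‖multiplier τ * u‖ * ‖w‖ := abs_real_inner_le_norm _ _
    _ = ‖multiplier τ‖ * ‖u‖ * ‖w‖ := by rw [norm_mul]
    _ ≤ 2 * ‖u‖ * ‖w‖ := by gcongr; exact norm_multiplier_le_two τ

/-- The symmetrizer, a quadratic functional of a solution value `u` and its flux `w`. The term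
`- κ ‖w‖ ^ 2` absorbs the flux at the boundary, which the Dirichlet data does not control. -/
noncomputable def symmetrizer (τ κ : ℝ) (u w : ℂ) : ℝ :=
  ⟪multiplier τ * u, w⟫_ℝ - κ * ‖w‖ ^ 2

/-- The directional derivative of the symmetrizer at `(u, w)`, along a direction of `ℂ × ℂ`. -/
noncomputable def symmetrizerDeriv (τ κ : ℝ) (u w u' w' : ℂ) : ℝ :=
  ⟪multiplier τ * u, w'⟫_ℝ + ⟪multiplier τ * u', w⟫_ℝ - κ * (2 * ⟪w, w'⟫_ℝ)

section Symmetrizer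

variable {τ κ : ℝ}

theorem symmetrizer_le (hκ : 0 < κ) (u w : ℂ) : symmetrizer τ κ u w ≤ κ⁻¹ * ‖u‖ ^ 2 := by
  have inner_le := (abs_le.1 (abs_inner_multiplier_mul_le τ u w)).2
  have young : 2 * ‖w‖ * ‖u‖ ≤ κ * ‖w‖ ^ 2 + κ⁻¹ * ‖u‖ ^ 2 := two_mul_le_add_mul_sq hκ
  unfold symmetrizer
  linarith

theorem continuous_symmetrizer (τ κ : ℝ) :
    Continuous fun p : ℂ × ℂ => symmetrizer τ κ p.1 p.2 := by
  unfold symmetrizer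
  fun_prop

theorem tendsto_symmetrizer_zero {u w : ℝ → ℂ} {l : Filter ℝ} (hu : Tendsto u l (𝓝 0))
    (hw : Tendsto w l (𝓝 0)) : Tendsto (fun z => symmetrizer τ κ (u z) (w z)) l (𝓝 0) := by
  have symmetrizer_zero : symmetrizer τ κ 0 0 = 0 := by simp [symmetrizer]
  simpa only [symmetrizer_zero, Function.comp_def] using
    ((continuous_symmetrizer τ κ).tendsto (0, 0)).comp (hu.prodMk_nhds hw)

theorem hasDerivAt_symmetrizer {u w : ℝ → ℂ} {u' w' : ℂ} {z : ℝ} (hu : HasDerivAt u u' z)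
    (hw : HasDerivAt w w' z) :
    HasDerivAt (fun s => symmetrizer τ κ (u s) (w s))
      (symmetrizerDeriv τ κ (u z) (w z) u' w') z :=
  ((hu.const_mul (multiplier τ)).inner ℝ hw).sub (hw.norm_sq.const_mul κ)

theorem symmetrizerDeriv_smul (t : ℝ) (u w u' w' : ℂ) :
    symmetrizerDeriv τ κ u w (t • u') (t • w') = t * symmetrizerDeriv τ κ u w u' w' := by
  simp only [symmetrizerDeriv, mul_smul_comm, real_inner_smul_left, real_inner_smul_right]
  ring

end Symmetrizer

namespace ParabolicSymbol.IsElliptic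

variable {S : ParabolicSymbol} {c M X L γ τ : ℝ}

theorem le_inner_multiplier (hS : S.IsElliptic c M X) (hc : 0 ≤ c) (hγ : 0 ≤ γ)
    (hL : L ^ 4 = γ ^ 2 + τ ^ 2 + X ^ 4) (u v f : ℂ) :
    c * (L ^ 2 * ‖u‖ ^ 2 + ‖v‖ ^ 2) - 2 * M * (‖u‖ * ‖f‖) ≤
      ⟪multiplier τ * u, S.fluxRate γ τ u v f⟫_ℝ + ⟪multiplier τ * v, S.flux u v⟫_ℝ := by
  rw [inner_mul_fluxRate_add_inner_mul_flux, multiplier, sign_mul_self, one_mul, one_mul,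
    ← multiplier]
  have source_le : S.normal * ⟪multiplier τ * u, f⟫_ℝ ≤ 2 * M * (‖u‖ * ‖f‖) :=
    calc S.normal * ⟪multiplier τ * u, f⟫_ℝ ≤ |S.normal| * |⟪multiplier τ * u, f⟫_ℝ| :=
          (le_abs_self _).trans_eq (abs_mul _ _)
      _ ≤ M * (2 * ‖u‖ * ‖f‖) := by
          gcongr
          exacts [hS.bound_nonneg, hS.abs_normal_le, abs_inner_multiplier_mul_le τ u f]
      _ = 2 * M * (‖u‖ * ‖f‖) := by ring
  have time_ge : c * (γ + |τ|) * ‖u‖ ^ 2 ≤ S.time * (γ + |τ|) * ‖u‖ ^ 2 := by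
    gcongr; exact hS.le_time
  have weight_le : c * (L ^ 2 * ‖u‖ ^ 2) ≤ c * ((γ + |τ| + X ^ 2) * ‖u‖ ^ 2) := by
    gcongr; exact sq_le_add_abs_add_sq_of_pow_four_eq hγ hL
  linarith [hS.le_hermitianForm u v]

theorem two_mul_inner_flux_fluxRate_le (hS : S.IsElliptic c M X) (hL₀ : 0 < L)
    (hL : L ^ 4 = γ ^ 2 + τ ^ 2 + X ^ 4) (u v f : ℂ) :
    2 * ⟪S.flux u v, S.fluxRate γ τ u v f⟫_ℝ ≤
      8 * M ^ 2 * L * (L ^ 2 * ‖u‖ ^ 2 + ‖v‖ ^ 2 + ‖f‖ ^ 2 / L ^ 2) := by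
  have hM := hS.bound_nonneg
  have hX_sq : X ^ 2 ≤ L ^ 2 := sq_le_sq_of_pow_four_eq hL
  have hX : X ≤ L := le_of_sq_le_sq hX_sq hL₀.le
  have flux_le : ‖S.flux u v‖ ≤ M * (‖v‖ + L * ‖u‖) :=
    (hS.norm_flux_le u v).trans (by gcongr)
  have fluxRate_le : ‖S.fluxRate γ τ u v f‖ ≤ M * ((L ^ 2 + L ^ 2) * ‖u‖ + L * ‖v‖ + ‖f‖) :=
    (hS.norm_fluxRate_le u v f).trans (by
      gcongr; exact norm_add_mul_I_le_sq_of_pow_four_eq hL)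
  set n := L * ‖u‖ with hn
  set φ := ‖f‖ / L with hφ
  calc 2 * ⟪S.flux u v, S.fluxRate γ τ u v f⟫_ℝ
      ≤ 2 * (‖S.flux u v‖ * ‖S.fluxRate γ τ u v f‖) := by
        gcongr; exact real_inner_le_norm _ _
    _ ≤ 2 * (M * (‖v‖ + n) * (M * ((L ^ 2 + L ^ 2) * ‖u‖ + L * ‖v‖ + ‖f‖))) := by gcongr
    _ = 2 * M ^ 2 * L * ((‖v‖ + n) * (2 * n + ‖v‖ + φ)) := by
        rw [hφ, hn]; field_simp; ring
    _ ≤ 2 * M ^ 2 * L * (4 * (n ^ 2 + ‖v‖ ^ 2 + φ ^ 2)) := by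
        refine mul_le_mul_of_nonneg_left ?_ (by positivity)
        nlinarith [sq_nonneg (n - ‖v‖), sq_nonneg (n - φ), sq_nonneg (‖v‖ - φ), sq_nonneg φ]
    _ = 8 * M ^ 2 * L * (L ^ 2 * ‖u‖ ^ 2 + ‖v‖ ^ 2 + ‖f‖ ^ 2 / L ^ 2) := by
        rw [hφ, hn, mul_pow, div_pow]; ring

/-- The weight `κ = c / (32 M² L)` makes the flux term cost a quarter of the coercive one. -/
theorem le_symmetrizerDeriv (hS : S.IsElliptic c M X) (hc : 0 < c) (hγ : 0 ≤ γ)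
    (hL₀ : 0 < L) (hL : L ^ 4 = γ ^ 2 + τ ^ 2 + X ^ 4) (u v f : ℂ) :
    c / 2 * (L ^ 2 * ‖u‖ ^ 2 + ‖v‖ ^ 2) - (4 * M ^ 2 / c + c / 4) / L ^ 2 * ‖f‖ ^ 2 ≤
      symmetrizerDeriv τ (c / (32 * M ^ 2 * L)) u (S.flux u v) v (S.fluxRate γ τ u v f) := by
  have hM := hS.bound_pos hc
  have energy := hS.le_inner_multiplier hc.le hγ hL u v f
  have young : 2 * (L * ‖u‖) * (M * (‖f‖ / L)) ≤
      c / 4 * (L * ‖u‖) ^ 2 + (c / 4)⁻¹ * (M * (‖f‖ / L)) ^ 2 :=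
    two_mul_le_add_mul_sq (by positivity)
  have source : 2 * (L * ‖u‖) * (M * (‖f‖ / L)) = 2 * M * (‖u‖ * ‖f‖) := by field_simp
  have flux_term : c / (32 * M ^ 2 * L) * (2 * ⟪S.flux u v, S.fluxRate γ τ u v f⟫_ℝ) ≤
      c / 4 * (L ^ 2 * ‖u‖ ^ 2 + ‖v‖ ^ 2 + ‖f‖ ^ 2 / L ^ 2) :=
    calc _ ≤ c / (32 * M ^ 2 * L) *
          (8 * M ^ 2 * L * (L ^ 2 * ‖u‖ ^ 2 + ‖v‖ ^ 2 + ‖f‖ ^ 2 / L ^ 2)) :=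
          mul_le_mul_of_nonneg_left (hS.two_mul_inner_flux_fluxRate_le hL₀ hL u v f)
            (by positivity)
      _ = _ := by field_simp; ring
  have source_const : (c / 4)⁻¹ * (M * (‖f‖ / L)) ^ 2 + c / 4 * (‖f‖ ^ 2 / L ^ 2) =
      (4 * M ^ 2 / c + c / 4) / L ^ 2 * ‖f‖ ^ 2 := by field_simp
  have v_nonneg : 0 ≤ c / 4 * ‖v‖ ^ 2 := by positivity
  unfold symmetrizerDeriv
  linarith

end ParabolicSymbol.IsElliptic

theorem setIntegral_Iio_le_sub_of_le_hasDerivAt {G G' K : ℝ → ℝ} {b ℓ : ℝ}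
    (hG : ContinuousOn G (Iic b)) (hG' : ∀ z < b, HasDerivAt G (G' z) z)
    (hK : IntegrableOn K (Iio b)) (hle : ∀ z < b, K z ≤ G' z) (hlim : Tendsto G atBot (𝓝 ℓ)) :
    ∫ z in Iio b, K z ≤ G b - ℓ := by
  have hK' : IntegrableOn K (Iic b) := by
    rwa [integrableOn_Iic_iff_integrableOn_Iio]
  rw [← integral_Iic_eq_integral_Iio]
  refine le_of_tendsto_of_tendsto (intervalIntegral_tendsto_integral_Iic b hK' tendsto_id)
    (hlim.const_sub (G b)) ?_
  filter_upwards [eventually_le_atBot b] with z hz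
  exact intervalIntegral.integral_le_sub_of_hasDeriv_right_of_le hz
    (hG.mono Icc_subset_Iic_self) (fun w hw => (hG' w hw.2).hasDerivWithinAt)
    (hK'.mono_set Icc_subset_Iic_self) fun w hw => hle w hw.2

theorem tendsto_flux_zero {S : ℝ → ParabolicSymbol} {c M X : ℝ} {u v : ℝ → ℂ} {l : Filter ℝ}
    (hS : ∀ᶠ z in l, (S z).IsElliptic c M X) (hu : Tendsto u l (𝓝 0)) (hv : Tendsto v l (𝓝 0)) :
    Tendsto (fun z => (S z).flux (u z) (v z)) l (𝓝 0) := by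
  refine squeeze_zero_norm' (hS.mono fun z hz => hz.norm_flux_le (u z) (v z)) ?_
  simpa using (hv.norm.add (hu.norm.const_mul X)).const_mul M

theorem semiclassical_energy_estimate {S : ℝ → ParabolicSymbol} {c M X L γ τ r : ℝ}
    {u v f : ℝ → ℂ} (hS : ∀ z ≤ 0, (S z).IsElliptic c M X) (hc : 0 < c) (hγ : 0 ≤ γ)
    (hL₀ : 0 < L) (hL : L ^ 4 = γ ^ 2 + τ ^ 2 + X ^ 4) (hr : 0 < r)
    (hu : ContinuousOn u (Iic 0)) (hflux : ContinuousOn (fun z => (S z).flux (u z) (v z)) (Iic 0))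
    (hu' : ∀ z < 0, HasDerivAt u (r⁻¹ • v z) z)
    (hflux' : ∀ z < 0, HasDerivAt (fun s => (S s).flux (u s) (v s))
      (r⁻¹ • (S z).fluxRate γ τ (u z) (v z) (f z)) z)
    (hu_lim : Tendsto u atBot (𝓝 0)) (hv_lim : Tendsto v atBot (𝓝 0))
    (hu_int : IntegrableOn (fun z => ‖u z‖ ^ 2) (Iio 0))
    (hv_int : IntegrableOn (fun z => ‖v z‖ ^ 2) (Iio 0))
    (hf_int : IntegrableOn (fun z => ‖f z‖ ^ 2) (Iio 0)) :
    c / 2 * (L ^ 2 * (∫ z in Iio 0, ‖u z‖ ^ 2) + ∫ z in Iio 0, ‖v z‖ ^ 2)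
        - (4 * M ^ 2 / c + c / 4) / L ^ 2 * ∫ z in Iio 0, ‖f z‖ ^ 2
      ≤ 32 * M ^ 2 / c * (r * L * ‖u 0‖ ^ 2) := by
  have hM := (hS 0 le_rfl).bound_pos hc
  set κ := c / (32 * M ^ 2 * L) with hκ
  set w : ℝ → ℂ := fun z => (S z).flux (u z) (v z)
  set G : ℝ → ℝ := fun z => r * symmetrizer τ κ (u z) (w z)
  have hG_cont : ContinuousOn G (Iic 0) :=
    ((continuous_symmetrizer τ κ).comp_continuousOn (hu.prodMk hflux)).const_mul r
  have hG_deriv : ∀ z < 0, HasDerivAt G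
      (symmetrizerDeriv τ κ (u z) (w z) (v z) ((S z).fluxRate γ τ (u z) (v z) (f z))) z := by
    intro z hz
    have h := (hasDerivAt_symmetrizer (τ := τ) (κ := κ) (hu' z hz) (hflux' z hz)).const_mul r
    rwa [symmetrizerDeriv_smul, mul_inv_cancel_left₀ hr.ne'] at h
  have hG_lim : Tendsto G atBot (𝓝 0) := by
    have hw_lim := tendsto_flux_zero ((eventually_le_atBot 0).mono hS) hu_lim hv_lim
    simpa only [mul_zero] using (tendsto_symmetrizer_zero hu_lim hw_lim).const_mul r
  have hcoercive_int : IntegrableOn (fun z => c / 2 * (L ^ 2 * ‖u z‖ ^ 2 + ‖v z‖ ^ 2)) (Iio 0) :=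
    ((hu_int.const_mul _).add hv_int).const_mul _
  have hsource_int := hf_int.const_mul ((4 * M ^ 2 / c + c / 4) / L ^ 2)
  calc _ = ∫ z in Iio 0, (c / 2 * (L ^ 2 * ‖u z‖ ^ 2 + ‖v z‖ ^ 2)
            - (4 * M ^ 2 / c + c / 4) / L ^ 2 * ‖f z‖ ^ 2) := by
        rw [integral_sub hcoercive_int hsource_int, integral_const_mul,
          integral_const_mul, integral_add (hu_int.const_mul _) hv_int, integral_const_mul]
    _ ≤ G 0 - 0 := setIntegral_Iio_le_sub_of_le_hasDerivAt hG_cont hG_deriv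
        (hcoercive_int.sub hsource_int)
        (fun z hz => (hS z hz.le).le_symmetrizerDeriv hc hγ hL₀ hL _ _ _) hG_lim
    _ ≤ r * (κ⁻¹ * ‖u 0‖ ^ 2) := by
        rw [sub_zero]
        exact mul_le_mul_of_nonneg_left (symmetrizer_le (by positivity) _ _) hr.le
    _ = 32 * M ^ 2 / c * (r * L * ‖u 0‖ ^ 2) := by rw [hκ]; field_simp

section Coefficients

variable {ι κ : Type*} [Fintype ι] [Fintype κ]

theorem abs_sum_sum_mul_mul_le (a : ι → κ → ℝ) (x : ι → ℝ) (y : κ → ℝ) :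
    |∑ i, ∑ j, x i * a i j * y j| ≤
      √(∑ i, ∑ j, a i j ^ 2) * (√(∑ i, x i ^ 2) * √(∑ j, y j ^ 2)) := by
  rw [← Real.sqrt_mul (by positivity), ← Real.sqrt_mul (by positivity)]
  refine Real.abs_le_sqrt ?_
  calc (∑ i, ∑ j, x i * a i j * y j) ^ 2 = (∑ p : ι × κ, a p.1 p.2 * (x p.1 * y p.2)) ^ 2 := by
        rw [Fintype.sum_prod_type]; simp only [mul_left_comm, mul_assoc]
    _ ≤ (∑ p : ι × κ, a p.1 p.2 ^ 2) * ∑ p : ι × κ, (x p.1 * y p.2) ^ 2 :=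
        Finset.sum_mul_sq_le_sq_mul_sq _ _ _
    _ = (∑ i, ∑ j, a i j ^ 2) * ((∑ i, x i ^ 2) * ∑ j, y j ^ 2) := by
        simp only [Fintype.sum_prod_type, mul_pow, Finset.sum_mul_sum]

end Coefficients

section ModelOperator

variable {n : ℕ}

namespace ParabolicSymbol

/-- The symbol of the operator with coefficients `a₀` and `a` at the rescaled tangential
frequency `ξ`; the normal variable is the last of the `n + 1` space variables. -/
noncomputable def ofCoefficients (a₀ : ℝ) (a : Fin (n + 1) → Fin (n + 1) → ℝ) (ξ : Fin n → ℝ) :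
    ParabolicSymbol where
  time := a₀
  normal := a (Fin.last n) (Fin.last n)
  cross := ∑ k : Fin n, a (Fin.last n) k.castSucc * ξ k
  tangential := ∑ i : Fin n, ∑ j : Fin n, a i.castSucc j.castSucc * (ξ i * ξ j)

variable {a₀ c M : ℝ} {a : Fin (n + 1) → Fin (n + 1) → ℝ} {ξ : Fin n → ℝ}

theorem sum_sum_snoc_mul_mul_snoc (a₀ : ℝ) (hsymm : ∀ i j, a i j = a j i) (ξ : Fin n → ℝ)
    (s t s' t' : ℝ) :
    ∑ i, ∑ j, (Fin.snoc (s • ξ) t : Fin (n + 1) → ℝ) i * a i j *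
        (Fin.snoc (s' • ξ) t' : Fin (n + 1) → ℝ) j =
      (ofCoefficients a₀ a ξ).tangential * (s * s')
        + (ofCoefficients a₀ a ξ).cross * (s * t' + s' * t)
        + (ofCoefficients a₀ a ξ).normal * (t * t') := by
  simp only [Fin.sum_univ_castSucc, Fin.snoc_castSucc, Fin.snoc_last, Finset.sum_add_distrib,
    ofCoefficients, Pi.smul_apply, smul_eq_mul, Finset.sum_mul, mul_add,
    fun k : Fin n => hsymm k.castSucc (Fin.last n)]
  simp only [mul_comm, mul_left_comm]
  ring

theorem sum_snoc_smul_sq (ξ : Fin n → ℝ) (s t : ℝ) :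
    ∑ i, (Fin.snoc (s • ξ) t : Fin (n + 1) → ℝ) i ^ 2 = s ^ 2 * (∑ i, ξ i ^ 2) + t ^ 2 := by
  simp [Fin.sum_univ_castSucc, mul_pow, Finset.mul_sum]

theorem isElliptic_ofCoefficients (hsymm : ∀ i j, a i j = a j i) (hle : c ≤ a₀)
    (hbound : |a₀| + √(∑ i, ∑ j, a i j ^ 2) ≤ M)
    (hell : ∀ η : Fin (n + 1) → ℝ, c * ∑ i, η i ^ 2 ≤ ∑ i, ∑ j, η i * a i j * η j) :
    (ofCoefficients a₀ a ξ).IsElliptic c M (√(∑ i, ξ i ^ 2)) := by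
  have frobenius_le : √(∑ i, ∑ j, a i j ^ 2) ≤ M :=
    (le_add_of_nonneg_left (abs_nonneg _)).trans hbound
  have bilinear_le (s t s' t' : ℝ) :=
    (abs_sum_sum_mul_mul_le a (Fin.snoc (s • ξ) t) (Fin.snoc (s' • ξ) t')).trans
      (mul_le_mul_of_nonneg_right frobenius_le (by positivity))
  simp only [sum_sum_snoc_mul_mul_snoc a₀ hsymm, sum_snoc_smul_sq] at bilinear_le
  have time_le : |a₀| ≤ M := (le_add_of_nonneg_right (Real.sqrt_nonneg _)).trans hbound
  refine ⟨hle, time_le, ?_, ?_, ?_, fun s t => ?_⟩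
  · simpa using bilinear_le 0 1 0 1
  · simpa using bilinear_le 1 0 0 1
  · simpa [sq] using bilinear_le 1 0 1 0
  · have h := hell (Fin.snoc (s • ξ) t)
    rw [sum_sum_snoc_mul_mul_snoc a₀ hsymm, sum_snoc_smul_sq] at h
    rw [Real.sq_sqrt (by positivity)]
    linarith

end ParabolicSymbol

/-- The parabolic semiclassical weight `⟨ζ^ε⟩ = (γ² + τ² + |√ε ξ|⁴)^{1/4}`. -/
noncomputable def parabolicWeight (ε γ τ : ℝ) (ξ : Fin n → ℝ) : ℝ :=
  (γ ^ 2 + τ ^ 2 + ε ^ 2 * (∑ i, ξ i ^ 2) ^ 2) ^ ((1 : ℝ) / 4)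

theorem parabolicWeight_pow_four {ε : ℝ} (hε : 0 ≤ ε) (γ τ : ℝ) (ξ : Fin n → ℝ) :
    parabolicWeight ε γ τ ξ ^ 4 = γ ^ 2 + τ ^ 2 + √(∑ i, (√ε • ξ) i ^ 2) ^ 4 := by
  have sum_eq : ∑ i, (√ε • ξ) i ^ 2 = ε * ∑ i, ξ i ^ 2 := by
    simp [mul_pow, Real.sq_sqrt hε, Finset.mul_sum]
  have sqrt_pow_four : √(∑ i, (√ε • ξ) i ^ 2) ^ 4 = ε ^ 2 * (∑ i, ξ i ^ 2) ^ 2 := by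
    rw [pow_mul _ 2 2, Real.sq_sqrt (by positivity), sum_eq, mul_pow]
  rw [sqrt_pow_four, parabolicWeight, ← Real.rpow_mul_natCast (by positivity)]
  norm_num

/-- The model equation at the point `z`, for the coefficients `a₀`, `a` and the source `F`. The
normal variable is the last of the `n + 1` space variables, and derivatives of the coefficients
are one-sided at `z = 0`. -/
def SolvesModelEquationAt (ε γ τ : ℝ) (ξ : Fin n → ℝ) (a₀ : ℝ → ℝ)
    (a : ℝ → Fin (n + 1) → Fin (n + 1) → ℝ) (F Ω : ℝ → ℂ) (z : ℝ) : Prop :=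
  ((a₀ z / a z (Fin.last n) (Fin.last n) : ℝ) : ℂ) * ((γ : ℂ) + (τ : ℂ) * Complex.I) * Ω z
      + ((∑ i : Fin n, ∑ j : Fin n,
            a z i.castSucc j.castSucc / a z (Fin.last n) (Fin.last n) * (ε * ξ i * ξ j) : ℝ) : ℂ)
        * Ω z
      - 2 * Complex.I
        * ((∑ k : Fin n, a z k.castSucc (Fin.last n) / a z (Fin.last n) (Fin.last n)
              * (ε * ξ k) : ℝ) : ℂ)
        * deriv Ω z
    = (ε : ℂ) * deriv (deriv Ω) z
      + (Complex.I * (ε : ℂ)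
          * ((∑ k : Fin n, derivWithin (fun s => a s (Fin.last n) k.castSucc) (Iic 0) z
              / a z (Fin.last n) (Fin.last n) * ξ k : ℝ) : ℂ) * Ω z
        + (ε : ℂ)
          * ((derivWithin (fun s => a s (Fin.last n) (Fin.last n)) (Iic 0) z
              / a z (Fin.last n) (Fin.last n) : ℝ) : ℂ)
          * deriv Ω z)
      + F z

section HalfLine

variable {E : Type*} [NormedAddCommGroup E] [NormedSpace ℝ E] {f : ℝ → E} {b z : ℝ}

theorem hasDerivAt_derivWithin_Iic (hf : DifferentiableOn ℝ f (Iic b)) (hz : z < b) :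
    HasDerivAt f (derivWithin f (Iic b) z) z :=
  (hf z hz.le).hasDerivWithinAt.hasDerivAt (Iic_mem_nhds hz)

theorem eqOn_derivWithin_Iic_deriv (f : ℝ → E) (b : ℝ) :
    EqOn (derivWithin f (Iic b)) (deriv f) (Iio b) :=
  fun _ hz => derivWithin_of_mem_nhds (Iic_mem_nhds hz)

theorem tendsto_derivWithin_Iic_atBot {l : Filter E} (h : Tendsto (deriv f) atBot l) (b : ℝ) :
    Tendsto (derivWithin f (Iic b)) atBot l :=
  h.congr' ((eqOn_derivWithin_Iic_deriv f b).symm.eventuallyEq_of_mem (Iio_mem_atBot b))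

theorem hasDerivAt_derivWithin_Iic_deriv_deriv (hf : ContDiffOn ℝ 2 f (Iic b)) (hz : z < b) :
    HasDerivAt (derivWithin f (Iic b)) (deriv (deriv f) z) z := by
  have hf' : ContDiffOn ℝ 1 (derivWithin f (Iic b)) (Iic b) :=
    hf.derivWithin (uniqueDiffOn_Iic b) (by norm_num)
  have h := ((hf'.differentiableOn one_ne_zero) z hz.le).differentiableAt (Iic_mem_nhds hz)
  rw [← ((eqOn_derivWithin_Iic_deriv f b).eventuallyEq_of_mem (Iio_mem_nhds hz)).deriv_eq]
  exact h.hasDerivAt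

end HalfLine

namespace ParabolicSymbol

theorem hasDerivAt_flux {S : ℝ → ParabolicSymbol} {u v : ℝ → ℂ} {N' B' : ℝ} {u' v' : ℂ} {z : ℝ}
    (hN : HasDerivAt (fun s => (S s).normal) N' z) (hB : HasDerivAt (fun s => (S s).cross) B' z)
    (hu : HasDerivAt u u' z) (hv : HasDerivAt v v' z) :
    HasDerivAt (fun s => (S s).flux (u s) (v s))
      (N' * v z + (S z).normal * v' + (Complex.I * B' * u z + Complex.I * (S z).cross * u')) z :=
  (hN.ofReal_comp.mul hv).add ((hB.ofReal_comp.const_mul Complex.I).mul hu)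

theorem continuousOn_flux_ofCoefficients (a₀ : ℝ → ℝ) {a : ℝ → Fin (n + 1) → Fin (n + 1) → ℝ}
    (ξ : Fin n → ℝ) {u v : ℝ → ℂ} {s : Set ℝ} (ha : ContinuousOn a s) (hu : ContinuousOn u s)
    (hv : ContinuousOn v s) :
    ContinuousOn (fun z => (ofCoefficients (a₀ z) (a z) ξ).flux (u z) (v z)) s := by
  simp only [flux, ofCoefficients]
  fun_prop

end ParabolicSymbol

section ModelEquation

open ParabolicSymbol

variable {ε γ τ : ℝ} {ξ : Fin n → ℝ} {a₀ : ℝ → ℝ} {a : ℝ → Fin (n + 1) → Fin (n + 1) → ℝ}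
  {Ω F : ℝ → ℂ} {z : ℝ}

/-- Multiplying the model equation by `a₃₃` puts it in divergence form. -/
theorem SolvesModelEquationAt.sqrt_mul_flux_deriv (h : SolvesModelEquationAt ε γ τ ξ a₀ a F Ω z)
    (hε : 0 ≤ ε) (hsymm : ∀ i j, a z i j = a z j i)
    (hnormal : a z (Fin.last n) (Fin.last n) ≠ 0) :
    (√ε : ℂ) * (↑(derivWithin (fun s => a s (Fin.last n) (Fin.last n)) (Iic 0) z)
          * (√ε * deriv Ω z)
        + a z (Fin.last n) (Fin.last n) * (√ε * deriv (deriv Ω) z)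
        + (Complex.I * ↑(∑ k : Fin n, derivWithin (fun s => a s (Fin.last n) k.castSucc) (Iic 0) z
              * (√ε • ξ) k) * Ω z
          + Complex.I * ↑(ofCoefficients (a₀ z) (a z) (√ε • ξ)).cross * deriv Ω z)) =
      (ofCoefficients (a₀ z) (a z) (√ε • ξ)).fluxRate γ τ (Ω z) (√ε * deriv Ω z) (F z) := by
  obtain ⟨r, hr, rfl⟩ : ∃ r, 0 ≤ r ∧ r ^ 2 = ε := ⟨√ε, Real.sqrt_nonneg ε, Real.sq_sqrt hε⟩
  rw [Real.sqrt_sq hr]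
  unfold SolvesModelEquationAt at h
  set S := ofCoefficients (a₀ z) (a z) (r • ξ) with hS
  set N := a z (Fin.last n) (Fin.last n)
  set D := ∑ k : Fin n, derivWithin (fun s => a s (Fin.last n) k.castSucc) (Iic 0) z / N * ξ k
    with hD
  have tangential_eq : ∑ i : Fin n, ∑ j : Fin n,
      a z i.castSucc j.castSucc / N * (r ^ 2 * ξ i * ξ j) = S.tangential / N := by
    simp only [hS, ofCoefficients, Finset.sum_div, Pi.smul_apply, smul_eq_mul]
    exact Finset.sum_congr rfl fun i _ => Finset.sum_congr rfl fun j _ => by ring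
  have cross_eq : ∑ k : Fin n, a z k.castSucc (Fin.last n) / N * (r ^ 2 * ξ k) =
      r * S.cross / N := by
    simp only [hS, ofCoefficients, Finset.mul_sum, Finset.sum_div, Pi.smul_apply, smul_eq_mul]
    exact Finset.sum_congr rfl fun k _ => by rw [hsymm]; ring
  have cross_deriv_eq : ∑ k : Fin n,
      derivWithin (fun s => a s (Fin.last n) k.castSucc) (Iic 0) z * (r • ξ) k = N * (r * D) := by
    simp only [hD, Finset.mul_sum, Pi.smul_apply, smul_eq_mul]
    exact Finset.sum_congr rfl fun k _ => by field_simp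
  rw [tangential_eq, cross_eq] at h
  rw [cross_deriv_eq, fluxRate, show S.normal = N from rfl, show S.time = a₀ z from rfl]
  have N_ne : (N : ℂ) ≠ 0 := Complex.ofReal_ne_zero.2 hnormal
  push_cast [-Complex.ofReal_sum] at h ⊢
  field_simp at h
  linear_combination -h

theorem SolvesModelEquationAt.hasDerivAt_flux (h : SolvesModelEquationAt ε γ τ ξ a₀ a F Ω z)
    (hz : z < 0) (hε : 0 < ε) (hsymm : ∀ i j, a z i j = a z j i)
    (hnormal : a z (Fin.last n) (Fin.last n) ≠ 0) (ha : DifferentiableOn ℝ a (Iic 0))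
    (hΩ : ContDiffOn ℝ 2 Ω (Iic 0)) :
    HasDerivAt (fun s => (ofCoefficients (a₀ s) (a s) (√ε • ξ)).flux (Ω s)
        (√ε * derivWithin Ω (Iic 0) s))
      ((√ε)⁻¹ • (ofCoefficients (a₀ z) (a z) (√ε • ξ)).fluxRate γ τ (Ω z)
        (√ε * derivWithin Ω (Iic 0) z) (F z)) z := by
  have hentry (i j : Fin (n + 1)) : HasDerivAt (fun s => a s i j)
      (derivWithin (fun s => a s i j) (Iic 0) z) z :=
    hasDerivAt_derivWithin_Iic (differentiableOn_pi.1 (differentiableOn_pi.1 ha i) j) hz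
  have hcross : HasDerivAt (fun s => (ofCoefficients (a₀ s) (a s) (√ε • ξ)).cross)
      (∑ k : Fin n, derivWithin (fun s => a s (Fin.last n) k.castSucc) (Iic 0) z * (√ε • ξ) k) z :=
    HasDerivAt.fun_sum (u := Finset.univ) fun k _ =>
      (hentry (Fin.last n) k.castSucc).mul_const ((√ε • ξ) k)
  have hflux := ParabolicSymbol.hasDerivAt_flux (hentry (Fin.last n) (Fin.last n)) hcross
    (hasDerivAt_derivWithin_Iic (hΩ.differentiableOn two_ne_zero) hz)
    ((hasDerivAt_derivWithin_Iic_deriv_deriv hΩ hz).const_mul (√ε : ℂ))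
  rw [eqOn_derivWithin_Iic_deriv Ω 0 hz] at hflux ⊢
  have hsqrt : √ε ≠ 0 := (Real.sqrt_pos.2 hε).ne'
  rwa [← h.sqrt_mul_flux_deriv hε.le hsymm hnormal, ← Complex.real_smul, inv_smul_smul₀ hsqrt]

end ModelEquation

theorem mul_add_div_mul_le_of_energy_estimate {c L ε r M U V W P : ℝ} (hc : 0 < c) (hL : 0 < L)
    (hr : 0 ≤ r) (hW : 0 ≤ W) (hP : 0 ≤ P)
    (h : c / 2 * (L ^ 2 * U + ε * V) - (4 * M ^ 2 / c + c / 4) / L ^ 2 * P ≤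
      32 * M ^ 2 / c * (r * L * W)) :
    L * U + ε / L * V ≤ (64 * (M / c) ^ 2 + 1 / 2) * (r * W + P / L ^ 3) := by
  have divided : L * U + ε / L * V ≤
      64 * (M / c) ^ 2 * (r * W) + (8 * (M / c) ^ 2 + 1 / 2) * (P / L ^ 3) := by
    refine le_of_mul_le_mul_left ?_ (show 0 < c / 2 * L by positivity)
    calc c / 2 * L * (L * U + ε / L * V) = c / 2 * (L ^ 2 * U + ε * V) := by field_simp
      _ ≤ 32 * M ^ 2 / c * (r * L * W) + (4 * M ^ 2 / c + c / 4) / L ^ 2 * P := by linarith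
      _ = _ := by field_simp; ring
  have source_nonneg : 0 ≤ 56 * (M / c) ^ 2 * (P / L ^ 3) := by positivity
  have boundary_nonneg : 0 ≤ 1 / 2 * (r * W) := by positivity
  linarith

theorem model_parabolic_estimate_general {m c₀ M : ℝ} (hm : 0 < m) (hc₀ : 0 < c₀) {ε γ τ : ℝ}
    {ξ : Fin n → ℝ} (hε : 0 < ε) (hγ : 0 ≤ γ) (hweight : 0 < parabolicWeight ε γ τ ξ)
    {a₀ : ℝ → ℝ} {a : ℝ → Fin (n + 1) → Fin (n + 1) → ℝ} {Ω F : ℝ → ℂ}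
    (ha : DifferentiableOn ℝ a (Iic 0)) (hsymm : ∀ z ≤ 0, ∀ i j, a z i j = a z j i)
    (hle : ∀ z ≤ 0, m ≤ a₀ z) (hbound : ∀ z ≤ 0, |a₀ z| + √(∑ i, ∑ j, a z i j ^ 2) ≤ M)
    (hell : ∀ z ≤ 0, ∀ η : Fin (n + 1) → ℝ,
      c₀ * ∑ i, η i ^ 2 ≤ ∑ i, ∑ j, η i * a z i j * η j)
    (hΩ : ContDiffOn ℝ 2 Ω (Iic 0)) (hΩ_int : IntegrableOn (fun z => ‖Ω z‖ ^ 2) (Iio 0))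
    (hΩ'_int : IntegrableOn (fun z => ‖deriv Ω z‖ ^ 2) (Iio 0))
    (hF_int : IntegrableOn (fun z => ‖F z‖ ^ 2) (Iio 0)) (hΩ_lim : Tendsto Ω atBot (𝓝 0))
    (hΩ'_lim : Tendsto (deriv Ω) atBot (𝓝 0))
    (heq : ∀ z < 0, SolvesModelEquationAt ε γ τ ξ a₀ a F Ω z) :
    parabolicWeight ε γ τ ξ * (∫ z in Iio 0, ‖Ω z‖ ^ 2)
        + ε / parabolicWeight ε γ τ ξ * (∫ z in Iio 0, ‖deriv Ω z‖ ^ 2)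
      ≤ (64 * (M / min m c₀) ^ 2 + 1 / 2)
        * (√ε * ‖Ω 0‖ ^ 2 + (∫ z in Iio 0, ‖F z‖ ^ 2) / parabolicWeight ε γ τ ξ ^ 3) := by
  have hc : 0 < min m c₀ := lt_min hm hc₀
  have hr : 0 < √ε := Real.sqrt_pos.2 hε
  set S : ℝ → ParabolicSymbol := fun z => .ofCoefficients (a₀ z) (a z) (√ε • ξ)
  set v : ℝ → ℂ := fun z => √ε * derivWithin Ω (Iic 0) z with hv
  have hS (z : ℝ) (hz : z ≤ 0) :
      (S z).IsElliptic (min m c₀) M (√(∑ i, (√ε • ξ) i ^ 2)) :=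
    ParabolicSymbol.isElliptic_ofCoefficients (hsymm z hz) ((min_le_left _ _).trans (hle z hz))
      (hbound z hz) fun η => le_trans (by gcongr; exact min_le_right _ _) (hell z hz η)
  have hv_norm : EqOn (fun z => ε * ‖deriv Ω z‖ ^ 2) (fun z => ‖v z‖ ^ 2) (Iio 0) := by
    intro z hz
    simp [hv, eqOn_derivWithin_Iic_deriv Ω 0 hz, mul_pow, Real.sq_sqrt hε.le]
  have hv_int : IntegrableOn (fun z => ‖v z‖ ^ 2) (Iio 0) :=
    IntegrableOn.congr_fun (hΩ'_int.const_mul ε) hv_norm measurableSet_Iio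
  have hv_lim : Tendsto v atBot (𝓝 0) := by
    simpa using (tendsto_derivWithin_Iic_atBot hΩ'_lim 0).const_mul (√ε : ℂ)
  have hv_cont : ContinuousOn v (Iic 0) :=
    (hΩ.continuousOn_derivWithin (uniqueDiffOn_Iic 0) one_le_two).const_mul _
  have hΩ' (z : ℝ) (hz : z < 0) : HasDerivAt Ω ((√ε)⁻¹ • v z) z := by
    simp only [hv, ← Complex.real_smul, inv_smul_smul₀ hr.ne']
    exact hasDerivAt_derivWithin_Iic (hΩ.differentiableOn two_ne_zero) hz
  have hflux' (z : ℝ) (hz : z < 0) := (heq z hz).hasDerivAt_flux hz hε (hsymm z hz.le)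
    (hc.trans_le (hS z hz.le).le_normal).ne' ha hΩ
  have energy := semiclassical_energy_estimate hS hc hγ hweight
    (parabolicWeight_pow_four hε.le γ τ ξ) hr hΩ.continuousOn
    (ParabolicSymbol.continuousOn_flux_ofCoefficients a₀ _ ha.continuousOn hΩ.continuousOn hv_cont)
    hΩ' hflux' hΩ_lim hv_lim hΩ_int hv_int hF_int
  rw [← setIntegral_congr_fun measurableSet_Iio hv_norm, integral_const_mul] at energy
  exact mul_add_div_mul_le_of_energy_estimate hc hweight hr.le (by positivity)
    (by positivity) energy

end ModelOperator

/-- Proposition 10.4 of the paper (estimate (10.24)): the model estimate for the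
Fourier–Laplace transform of the convection–diffusion equation satisfied by the vorticity,
with non-homogeneous Dirichlet data at `z = 0`.  Here `⟨ζ^ε⟩ = (γ² + τ² + ε²|ξ|⁴)^{1/4}`,
`γ` is the Laplace parameter, `(τ, ξ)` the Fourier variables, and `′ = d/dz`. -/
theorem model_parabolic_estimate (m c₀ M : ℝ) (hm : 0 < m) (hc₀ : 0 < c₀) (hM : 0 < M) :
    ∃ γ₀ : ℝ, 1 ≤ γ₀ ∧ ∃ C : ℝ, 0 < C ∧
      ∀ (ε γ τ : ℝ) (ξ : Fin 2 → ℝ), 0 < ε → ε ≤ 1 → γ₀ ≤ γ →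
        ∀ (a₀ : ℝ → ℝ) (a : ℝ → Fin 3 → Fin 3 → ℝ) (Ω F : ℝ → ℂ),
          ContDiffOn ℝ 1 a₀ (Set.Iic 0) → ContDiffOn ℝ 1 a (Set.Iic 0) →
          (∀ z ≤ (0 : ℝ), ∀ i j, a z i j = a z j i) →
          (∀ z ≤ (0 : ℝ), m ≤ a₀ z ∧ m ≤ a z 2 2) →
          (∀ z ≤ (0 : ℝ),
            |a₀ z| + Real.sqrt (∑ i : Fin 3, ∑ j : Fin 3, (a z i j) ^ 2)
              + Real.sqrt ε * (|derivWithin a₀ (Set.Iic 0) z|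
                + Real.sqrt (∑ i : Fin 3, ∑ j : Fin 3,
                    (derivWithin (fun s => a s i j) (Set.Iic 0) z) ^ 2)) ≤ M) →
          (∀ z ≤ (0 : ℝ), ∀ η : Fin 3 → ℝ,
            c₀ * (∑ i : Fin 3, η i ^ 2)
              ≤ ∑ i : Fin 3, ∑ j : Fin 3, η i * a z i j * η j) →
          ContDiffOn ℝ 2 Ω (Set.Iic 0) → ContinuousOn F (Set.Iic 0) →
          IntegrableOn (fun z => ‖Ω z‖ ^ 2) (Set.Iio 0) volume →
          IntegrableOn (fun z => ‖deriv Ω z‖ ^ 2) (Set.Iio 0) volume →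
          IntegrableOn (fun z => ‖F z‖ ^ 2) (Set.Iio 0) volume →
          Filter.Tendsto Ω Filter.atBot (nhds 0) →
          Filter.Tendsto (deriv Ω) Filter.atBot (nhds 0) →
          (∀ z < (0 : ℝ),
            ((a₀ z / a z 2 2 : ℝ) : ℂ) * ((γ : ℂ) + (τ : ℂ) * Complex.I) * Ω z
              + ((∑ i : Fin 2, ∑ j : Fin 2,
                    a z i.castSucc j.castSucc / a z 2 2 * (ε * ξ i * ξ j) : ℝ) : ℂ) * Ω z
              - 2 * Complex.I
                * ((∑ k : Fin 2, a z k.castSucc 2 / a z 2 2 * (ε * ξ k) : ℝ) : ℂ)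
                * deriv Ω z
            = (ε : ℂ) * deriv (deriv Ω) z
              + (Complex.I * (ε : ℂ)
                  * ((∑ k : Fin 2,
                        derivWithin (fun s => a s 2 k.castSucc) (Set.Iic 0) z
                          / a z 2 2 * ξ k : ℝ) : ℂ) * Ω z
                + (ε : ℂ)
                  * ((derivWithin (fun s => a s 2 2) (Set.Iic 0) z / a z 2 2 : ℝ) : ℂ)
                  * deriv Ω z)
              + F z) →
          (γ ^ 2 + τ ^ 2 + ε ^ 2 * (∑ i : Fin 2, ξ i ^ 2) ^ 2) ^ ((1 : ℝ) / 4)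
              * (∫ z in Set.Iio (0 : ℝ), ‖Ω z‖ ^ 2)
            + ε / (γ ^ 2 + τ ^ 2 + ε ^ 2 * (∑ i : Fin 2, ξ i ^ 2) ^ 2) ^ ((1 : ℝ) / 4)
              * (∫ z in Set.Iio (0 : ℝ), ‖deriv Ω z‖ ^ 2)
          ≤ C * (Real.sqrt ε * ‖Ω 0‖ ^ 2
              + (∫ z in Set.Iio (0 : ℝ), ‖F z‖ ^ 2)
                / ((γ ^ 2 + τ ^ 2 + ε ^ 2 * (∑ i : Fin 2, ξ i ^ 2) ^ 2) ^ ((1 : ℝ) / 4)) ^ 3) := by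
  refine ⟨1, le_rfl, 64 * (M / min m c₀) ^ 2 + 1 / 2, by positivity, ?_⟩
  intro ε γ τ ξ hε _ hγ a₀ a Ω F _ ha hsymm hle hbound hell hΩ _ hΩ_int hΩ'_int hF_int hΩ_lim
    hΩ'_lim heq
  have hγ₀ : 0 < γ := zero_lt_one.trans_le hγ
  exact model_parabolic_estimate_general hm hc₀ hε hγ₀.le (by unfold parabolicWeight; positivity)
    (ha.differentiableOn one_ne_zero) hsymm (fun z hz => (hle z hz).1)
    (fun z hz => (le_add_of_nonneg_right (by positivity)).trans (hbound z hz)) hell hΩ hΩ_int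
    hΩ'_int hF_int hΩ_lim hΩ'_lim heq
end
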